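/- arXiv:1606.05443 — 2 statements merged into one kernel-verified Lean document; each statement's English description precedes it below -/
import Mathlib

section
/- Let l, k ∈ {0,1,2,...} ∪ {∞} with k ≤ l, let I ⊆ ℝ be an interval, and let γ : I → ℂ be a locally injective function of class C^l on I. Then the class of nowhere one-sided holomorphically extendable functions f ∈ C^k(γ) — that is, those f for which there exists no pair of a Jordan domain Ω whose boundary contains an arc γ([t1, t2]) for some t1 < t2 in I, and of a continuous function F : Ω ∪ γ((t1, t2)) → ℂ which is holomorphic on Ω and satisfies F = f on γ((t1, t2)) — is a dense and Gδ subset of C^k(γ). -/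
open Set Metric

/-- `γ` is locally injective on `I`: every point of `I` has a relative neighborhood
in `I` on which `γ` is injective. -/
def LocallyInjOn (γ : ℝ → ℂ) (I : Set ℝ) : Prop :=
  ∀ t ∈ I, ∃ ε > 0, Set.InjOn γ (I ∩ Ioo (t - ε) (t + ε))

/-- The space `C^k(γ)` of functions `f : γ(I) → ℂ` (represented by functions
`f : ℂ → ℂ`) such that `f ∘ γ` is `k` times continuously differentiable on `I`. -/
def CkGamma (k : ℕ∞) (I : Set ℝ) (γ : ℝ → ℂ) : Type :=
  {f : ℂ → ℂ // ContDiffOn ℝ k (fun t => f (γ t)) I}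

/-- The topology of `C^k(γ)`: the topology of uniform convergence on compact subsets
of `I` of all derivatives `(f ∘ γ)⁽ʲ⁾`, `j ≤ k`. -/
noncomputable def ckTop (k : ℕ∞) (I : Set ℝ) (γ : ℝ → ℂ) :
    TopologicalSpace (CkGamma k I γ) :=
  TopologicalSpace.induced
    (fun f => fun j : ℕ =>
      UniformOnFun.ofFun {K : Set ↥I | IsCompact K}
        (fun t : ↥I => if (j : ℕ∞) ≤ k then
            iteratedDerivWithin j (fun s => f.1 (γ s)) I (t : ℝ) else 0))
    inferInstance

/-- A Jordan domain: a bounded connected open subset of `ℂ` whose boundary is the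
image of a continuous injective map of the unit circle into `ℂ`. -/
def IsJordanDomain (Ω : Set ℂ) : Prop :=
  IsOpen Ω ∧ IsConnected Ω ∧ Bornology.IsBounded Ω ∧
  ∃ φ : ℂ → ℂ, ContinuousOn φ (sphere (0 : ℂ) 1) ∧ Set.InjOn φ (sphere (0 : ℂ) 1) ∧
    frontier Ω = φ '' sphere (0 : ℂ) 1

/-- `f : γ(I) → ℂ` is somewhere one-sided holomorphically extendable: there are a
Jordan domain `Ω` whose boundary contains an arc `γ([t1, t2])` for some `t1 < t2`
in `I`, and a continuous function `F` on `Ω ∪ γ((t1, t2))`, holomorphic on `Ω`,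
with `F = f` on `γ((t1, t2))`. -/
def SomewhereOneSidedHolExt (I : Set ℝ) (γ : ℝ → ℂ) (f : ℂ → ℂ) : Prop :=
  ∃ Ω : Set ℂ, IsJordanDomain Ω ∧
    ∃ t1 ∈ I, ∃ t2 ∈ I, t1 < t2 ∧
      γ '' Icc t1 t2 ⊆ frontier Ω ∧
      ∃ F : ℂ → ℂ, ContinuousOn F (Ω ∪ γ '' Ioo t1 t2) ∧
        DifferentiableOn ℂ F Ω ∧
        ∀ t ∈ Ioo t1 t2, F (γ t) = f (γ t)

/-!
One-sided extendability is witnessed by countably many closed conditions. If `f` extends to one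
side of a subarc of `γ`, then by separation properties of Jordan curves it extends, as a
holomorphic function bounded by an integer `M`, to a component `V` of a rational disc `B` minus a
rational subarc, with boundary values `f` on `∂V ∩ B`. For fixed `(B, V, M)` the set `E` of such
`f` is closed in `C^k(γ)`: every point of `∂V ∩ B` is the endpoint of a path outside `V`, hence
has a holomorphic barrier, so uniform convergence of the boundary values of functions bounded by
`M` forces locally uniform convergence up to `∂V ∩ B`. Moreover `E` has empty interior: the same
barriers show that the boundary values on `∂V ∩ B` determine a bounded holomorphic function, so if
`f ∈ E` then `f + s / (z - c)` with `s ≠ 0` and `c ∈ V` off the curve is not in `E`. Since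
`C^k(γ)` is a complete metrizable space, the complement of the countable union of the sets `E` is
a dense `Gδ`.
-/

open Filter Topology
section ContinuousLogarithm

variable {X : Type*} [TopologicalSpace X]

/-- `h` has a continuous branch of the logarithm on `S`. -/
def HasContinuousLogOn (h : X → ℂ) (S : Set X) : Prop :=
  ∃ g : X → ℂ, ContinuousOn g S ∧ ∀ z ∈ S, Complex.exp (g z) = h z

theorem HasContinuousLogOn.mono {h : X → ℂ} {S T : Set X} (hS : HasContinuousLogOn h S)
    (hTS : T ⊆ S) : HasContinuousLogOn h T :=
  let ⟨g, hg, hgh⟩ := hS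
  ⟨g, hg.mono hTS, fun z hz => hgh z (hTS hz)⟩

theorem exists_eq_add_const_of_exp_eq {S : Set X} (hS : IsPreconnected S) {f g : X → ℂ}
    (hf : ContinuousOn f S) (hg : ContinuousOn g S)
    (hfg : ∀ x ∈ S, Complex.exp (f x) = Complex.exp (g x)) :
    ∃ c, ∀ x ∈ S, f x = g x + c := by
  have hexp : ∀ x ∈ S, Complex.exp (f x - g x) = 1 := fun x hx => by
    rw [Complex.exp_sub, hfg x hx, div_self (Complex.exp_ne_zero _)]
  rcases S.eq_empty_or_nonempty with rfl | ⟨x₀, hx₀⟩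
  · exact ⟨0, by simp⟩
  refine ⟨f x₀ - g x₀, fun x hx => ?_⟩
  have : f x - g x = f x₀ - g x₀ := Complex.isCoveringMap_exp.constOn_of_comp hS (hf.sub hg)
    (fun a ha b hb => Subtype.ext ((hexp a ha).trans (hexp b hb).symm)) hx hx₀
  linear_combination this

theorem hasContinuousLogOn_sub_div_sub_of_joinedIn {S : Set ℂ} {a b : ℂ} (hba : JoinedIn Sᶜ b a) :
    HasContinuousLogOn (fun z => (z - a) / (z - b)) S := by
  classical
  obtain ⟨p, hp⟩ := hba
  have hne : ∀ (t : unitInterval) (z : S), (z : ℂ) - p t ≠ 0 := fun t z h =>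
    hp t (sub_eq_zero.1 h ▸ z.2)
  have hne' : ∀ z : S, (z : ℂ) - b ≠ 0 := fun z => by simpa using hne 0 z
  let H : C(unitInterval × S, {w : ℂ // w ≠ 0}) :=
    ⟨fun x => ⟨(x.2 - p x.1) / (x.2 - b), div_ne_zero (hne _ _) (hne' _)⟩, by
      refine Continuous.subtype_mk (Continuous.div (by fun_prop) (by fun_prop) fun x => hne' _) _⟩
  have hH : ∀ z, H (0, z) = ⟨Complex.exp ((0 : C(S, ℂ)) z), Complex.exp_ne_zero _⟩ := fun z =>
    Subtype.ext (by simp [H, div_self (hne' z)])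
  let G := Complex.isCoveringMap_exp.liftHomotopy H 0 hH
  refine ⟨fun z => if hz : z ∈ S then G (1, ⟨z, hz⟩) else 0, ?_, fun z hz => ?_⟩
  · rw [continuousOn_iff_continuous_domRestrict]
    have : S.domRestrict (fun z => if hz : z ∈ S then G (1, ⟨z, hz⟩) else 0) =
        fun z => G (1, z) := by
      ext z; simp
    rw [this]
    fun_prop
  · have hG : Complex.exp (G (1, ⟨z, hz⟩)) = (z - p 1) / (z - b) := congrArg Subtype.val
      (congrFun (Complex.isCoveringMap_exp.liftHomotopy_lifts H 0 hH) (1, ⟨z, hz⟩))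
    simpa only [hz, dite_true, p.target] using hG

theorem not_hasContinuousLogOn_sphere (a : ℂ) {R : ℝ} (hR : 0 < R) :
    ¬ HasContinuousLogOn (fun z => z - a) (sphere a R) := by
  rintro ⟨g, hg, hga⟩
  have hmem : ∀ θ : ℝ, circleMap a R θ ∈ sphere a R := circleMap_mem_sphere a hR.le
  obtain ⟨c, hc⟩ := exists_eq_add_const_of_exp_eq (S := (univ : Set ℝ)) isPreconnected_univ
    (f := fun θ => g (circleMap a R θ)) (g := fun θ => Complex.log R + θ * Complex.I)
    (hg.comp_continuous (continuous_circleMap a R) hmem).continuousOn (by fun_prop)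
    fun θ _ => by
      rw [hga _ (hmem θ), Complex.exp_add, Complex.exp_log (by exact_mod_cast hR.ne')]
      simp [circleMap]
  have hperiod := (hc 0 (mem_univ _)).symm.trans
    ((congrArg g (circleMap_eq_circleMap_iff a hR.ne' |>.2 ⟨-1, by simp⟩)).trans
      (hc (2 * Real.pi) (mem_univ _)))
  apply Complex.two_pi_I_ne_zero
  push_cast at hperiod
  linear_combination -hperiod

theorem hasContinuousLogOn_of_convex {E : Type*} [AddCommGroup E] [Module ℝ E]
    [TopologicalSpace E] [IsTopologicalAddGroup E] [ContinuousSMul ℝ E]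
    [LocallyPathConnectedSpace E] {U : Set E} (hU : Convex ℝ U) (hUo : IsOpen U) {h : E → ℂ}
    (hc : ContinuousOn h U) (h0 : ∀ z ∈ U, h z ≠ 0) : HasContinuousLogOn h U := by
  rcases U.eq_empty_or_nonempty with rfl | hne
  · exact ⟨0, continuousOn_empty _, by simp⟩
  have := hU.contractibleSpace hne
  have hUs : IsSimplyConnected U := inferInstanceAs (SimplyConnectedSpace U)
  exact Complex.exists_continuousOn_eqOn_exp_comp hUs hUo hc fun ⟨z, hz, h⟩ => h0 z hz h

end ContinuousLogarithm
section PlaneSeparation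

theorem frontier_connectedComponentIn_subset_compl {X : Type*} [TopologicalSpace X]
    [LocallyConnectedSpace X] {U : Set X} (hU : IsOpen U) (a : X) :
    frontier (connectedComponentIn U a) ⊆ Uᶜ := by
  intro z hz hzU
  obtain ⟨w, hwz, hwa⟩ := mem_closure_iff.1 hz.1 _ hU.connectedComponentIn
    (mem_connectedComponentIn hzU)
  rw [hU.connectedComponentIn.frontier_eq, connectedComponentIn_eq hwa,
    ← connectedComponentIn_eq hwz] at hz
  exact hz.2 (mem_connectedComponentIn hzU)

theorem subset_of_isPreconnected_of_disjoint_frontier {X : Type*} [TopologicalSpace X] {s u : Set X}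
    (hs : IsPreconnected s) (hsu : (s ∩ u).Nonempty) (hd : Disjoint s (frontier u)) : s ⊆ u := by
  have hcases : ∀ z ∈ s, z ∈ interior u ∨ z ∈ (closure u)ᶜ := fun z hz => by
    by_contra! h
    exact Set.disjoint_left.1 hd hz ⟨not_not.1 h.2, h.1⟩
  refine (hs.subset_left_of_subset_union isOpen_interior isClosed_closure.isOpen_compl ?_ hcases
    ?_).trans interior_subset
  · exact disjoint_compl_right.mono_left (interior_subset.trans subset_closure)
  · obtain ⟨z, hz, hzu⟩ := hsu
    exact ⟨z, hz, (hcases z hz).resolve_right fun h => h (subset_closure hzu)⟩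

theorem isPreconnected_compl_closedBall {E : Type*} [NormedAddCommGroup E] [NormedSpace ℝ E]
    (hE : 1 < Module.rank ℝ E) (c : E) {R : ℝ} (hR : 0 ≤ R) :
    IsPreconnected (closedBall c R)ᶜ := by
  have hpolar : (closedBall c R)ᶜ =
      (fun p : ℝ × E => c + p.1 • p.2) '' (Ioi R ×ˢ sphere (0 : E) 1) := by
    ext z
    simp only [mem_compl_iff, mem_closedBall, dist_eq_norm, not_le, mem_image, mem_prod, mem_Ioi,
      mem_sphere_zero_iff_norm, Prod.exists]
    constructor
    · intro hz
      have hz0 : ‖z - c‖ ≠ 0 := (hR.trans_lt hz).ne'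
      exact ⟨‖z - c‖, ‖z - c‖⁻¹ • (z - c), ⟨hz, by simp [norm_smul, hz0]⟩, by simp [smul_smul, hz0]⟩
    · rintro ⟨r, v, ⟨hr, hv⟩, rfl⟩
      rwa [add_sub_cancel_left, norm_smul, hv, mul_one, Real.norm_of_nonneg (hR.trans hr.le)]
  rw [hpolar]
  exact (isPreconnected_Ioi.prod (isPreconnected_sphere hE 0 1)).image _ (by fun_prop)

theorem connectedComponentIn_eq_or_isBounded {K : Set ℂ} (hK : Bornology.IsBounded K) {a b : ℂ} :
    connectedComponentIn Kᶜ a = connectedComponentIn Kᶜ b ∨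
      Bornology.IsBounded (connectedComponentIn Kᶜ a) ∨
      Bornology.IsBounded (connectedComponentIn Kᶜ b) := by
  obtain ⟨R, hR0, hR⟩ := hK.subset_closedBall_lt 0 0
  have hext := isPreconnected_compl_closedBall (by simp [Complex.rank_real_complex]) (0 : ℂ) hR0.le
  have key : ∀ x, ¬ Bornology.IsBounded (connectedComponentIn Kᶜ x) →
      (closedBall (0 : ℂ) R)ᶜ ⊆ connectedComponentIn Kᶜ x := fun x hx => by
    obtain ⟨z, hz, hzR⟩ := not_subset.1 fun h => hx (isBounded_closedBall.subset h)
    rw [connectedComponentIn_eq hz]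
    exact hext.subset_connectedComponentIn hzR (compl_subset_compl.2 hR)
  by_contra! h
  obtain ⟨z, hz⟩ : (closedBall (0 : ℂ) R)ᶜ.Nonempty :=
    nonempty_compl.2 fun h => NormedSpace.unbounded_univ ℂ ℂ (h ▸ isBounded_closedBall)
  exact h.1 ((connectedComponentIn_eq (key a h.2.1 hz)).trans
    (connectedComponentIn_eq (key b h.2.2 hz)).symm)

-- Gluing `(z - b) exp g` inside `W` to `z - a` outside gives a zero-free function on the plane
-- which has winding number one along large circles unless `b ∈ W`.
theorem mem_of_hasContinuousLogOn_frontier {W : Set ℂ} (hW : Bornology.IsBounded W)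
    {a b : ℂ} (ha : a ∈ W) (hb : b ∉ frontier W)
    (hlog : HasContinuousLogOn (fun z => (z - a) / (z - b)) (frontier W)) : b ∈ W := by
  classical
  by_contra hbW
  obtain ⟨g₀, hg₀, hexp⟩ := hlog
  obtain ⟨g, hg⟩ := ContinuousMap.exists_restrict_eq (Y := ℂ) isClosed_frontier
    ⟨_, continuousOn_iff_continuous_domRestrict.1 hg₀⟩
  have hgexp : ∀ z ∈ frontier W, (z - b) * Complex.exp (g z) = z - a := fun z hz => by
    have hgz : g z = g₀ z := congrArg (fun f => f ⟨z, hz⟩) hg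
    rw [hgz, hexp z hz, mul_div_cancel₀ _ (sub_ne_zero.2 (ne_of_mem_of_not_mem hz hb))]
  let h : ℂ → ℂ := fun z => if z ∈ W then (z - b) * Complex.exp (g z) else z - a
  have hc : Continuous h := Continuous.if hgexp (by fun_prop) (by fun_prop)
  have h0 : ∀ z, h z ≠ 0 := fun z => by
    by_cases hz : z ∈ W <;> simp only [h, hz, if_true, if_false]
    · exact mul_ne_zero (sub_ne_zero.2 (ne_of_mem_of_not_mem hz hbW)) (Complex.exp_ne_zero _)
    · exact sub_ne_zero.2 (ne_of_mem_of_not_mem ha hz).symm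
  obtain ⟨R, hR0, hR⟩ := hW.subset_ball_lt 0 a
  obtain ⟨G, hG, hGh⟩ := hasContinuousLogOn_of_convex convex_univ isOpen_univ hc.continuousOn
    fun z _ => h0 z
  refine not_hasContinuousLogOn_sphere a hR0 ⟨G, hG.mono (subset_univ _), fun z hz => ?_⟩
  rw [hGh z (mem_univ z)]
  exact if_neg fun hzW => (mem_ball.1 (hR hzW)).ne (mem_sphere.1 hz)

theorem HasContinuousLogOn.swap_div {S : Set ℂ} {a b : ℂ}
    (hlog : HasContinuousLogOn (fun z => (z - a) / (z - b)) S) :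
    HasContinuousLogOn (fun z => (z - b) / (z - a)) S := by
  obtain ⟨g, hg, hexp⟩ := hlog
  exact ⟨-g, hg.neg, fun z hz => by rw [Pi.neg_apply, Complex.exp_neg, hexp z hz, inv_div]⟩

/-- Eilenberg's criterion. -/
theorem connectedComponentIn_compl_eq_of_hasContinuousLogOn {K : Set ℂ} (hK : IsCompact K)
    {a b : ℂ} (ha : a ∉ K) (hb : b ∉ K)
    (hlog : HasContinuousLogOn (fun z => (z - a) / (z - b)) K) :
    connectedComponentIn Kᶜ a = connectedComponentIn Kᶜ b := by
  have hfr : ∀ x, frontier (connectedComponentIn Kᶜ x) ⊆ K := fun x =>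
    (frontier_connectedComponentIn_subset_compl hK.isClosed.isOpen_compl x).trans
      (compl_compl K).subset
  rcases connectedComponentIn_eq_or_isBounded hK.isBounded with h | h | h
  · exact h
  · exact connectedComponentIn_eq (mem_of_hasContinuousLogOn_frontier h
      (mem_connectedComponentIn ha) (fun h => hb (hfr a h)) (hlog.mono (hfr a)))
  · exact (connectedComponentIn_eq (mem_of_hasContinuousLogOn_frontier h
      (mem_connectedComponentIn hb) (fun h => ha (hfr b h)) (hlog.swap_div.mono (hfr b)))).symm

theorem isPreconnected_compl_of_hasContinuousLogOn {K : Set ℂ} (hK : IsCompact K)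
    (hlog : ∀ h : ℂ → ℂ, ContinuousOn h K → (∀ z ∈ K, h z ≠ 0) → HasContinuousLogOn h K) :
    IsPreconnected Kᶜ := by
  refine isPreconnected_of_forall_pair fun a ha b hb =>
    ⟨connectedComponentIn Kᶜ a, connectedComponentIn_subset _ _, mem_connectedComponentIn ha, ?_,
      isPreconnected_connectedComponentIn⟩
  have hne : ∀ c ∉ K, ∀ z ∈ K, z - c ≠ 0 := fun c hc z hz =>
    sub_ne_zero.2 (ne_of_mem_of_not_mem hz hc)
  rw [connectedComponentIn_compl_eq_of_hasContinuousLogOn hK ha hb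
    (hlog _ ((by fun_prop : ContinuousOn (· - a) K).div (by fun_prop) (hne b hb)) fun z hz =>
      div_ne_zero (hne a ha z hz) (hne b hb z hz))]
  exact mem_connectedComponentIn hb

theorem continuousOn_image_of_comp {X Y Z : Type*} [TopologicalSpace X] [TopologicalSpace Y]
    [T2Space Y] [TopologicalSpace Z] {s : Set X} (hs : IsCompact s) {p : X → Y}
    (hp : ContinuousOn p s) {h : Y → Z} (hh : ContinuousOn (h ∘ p) s) :
    ContinuousOn h (p '' s) := by
  refine continuousOn_iff_isClosed.2 fun t ht => ?_
  obtain ⟨u, hu, hut⟩ := continuousOn_iff_isClosed.1 hh t ht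
  have hcompact : IsCompact (u ∩ s) := hs.inter_left hu
  refine ⟨p '' (u ∩ s), (hcompact.image_of_continuousOn
    (hp.mono inter_subset_right)).isClosed, ?_⟩
  rw [← hut, preimage_comp, image_preimage_inter, inter_assoc, inter_self]

theorem continuousOn_range_of_comp {X Y Z : Type*} [TopologicalSpace X] [CompactSpace X]
    [TopologicalSpace Y] [T2Space Y] [TopologicalSpace Z] {p : X → Y} (hp : Continuous p)
    {h : Y → Z} (hh : Continuous (h ∘ p)) : ContinuousOn h (range p) := by
  rw [← image_univ]
  exact continuousOn_image_of_comp isCompact_univ hp.continuousOn hh.continuousOn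

theorem isPreconnected_compl_range_path {a b : ℂ} (p : Path a b) (hp : Function.Injective p) :
    IsPreconnected (range p)ᶜ := by
  refine isPreconnected_compl_of_hasContinuousLogOn (isCompact_range p.continuous) fun h hc h0 => ?_
  have hp' : ∀ t, p.extend t ∈ range p := fun t => p.extend_range ▸ mem_range_self t
  obtain ⟨G, hG, hGh⟩ := hasContinuousLogOn_of_convex (E := ℝ) convex_univ isOpen_univ
    (hc.comp_continuous p.extend.continuous hp').continuousOn fun t _ => h0 _ (hp' t)
  have hinv : ∀ t, Function.invFun p (p t) = t := Function.leftInverse_invFun hp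
  refine ⟨fun z => G (Function.invFun p z : unitInterval),
    continuousOn_range_of_comp p.continuous ?_, ?_⟩
  · simp only [Function.comp_def, hinv]
    exact (continuousOn_univ.1 hG).comp continuous_subtype_val
  · rintro _ ⟨t, rfl⟩
    simp only [hinv, hGh t (mem_univ _)]
    exact congrArg h (p.extend_apply t.2)

end PlaneSeparation
section JordanCurves

/-- A Jordan curve, as a subset of the plane: the image of the unit circle under a continuous
injective map. -/
def IsJordanCurve (J : Set ℂ) : Prop :=
  ∃ φ : ℂ → ℂ, ContinuousOn φ (sphere 0 1) ∧ InjOn φ (sphere 0 1) ∧ J = φ '' sphere 0 1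

theorem IsJordanCurve.isCompact {J : Set ℂ} (hJ : IsJordanCurve J) : IsCompact J := by
  obtain ⟨φ, hφ, -, rfl⟩ := hJ
  exact (isCompact_sphere 0 1).image_of_continuousOn hφ

theorem injOn_circleMap_two_pi_mul_add (θ : ℝ) :
    InjOn (fun t => circleMap 0 1 (2 * Real.pi * t + θ)) (Ico 0 1) := fun s hs t ht h => by
  have hst := eq_of_circleMap_eq one_ne_zero ?_ h
  · exact mul_left_cancel₀ Real.two_pi_pos.ne' (add_right_cancel hst)
  · rw [add_sub_add_right_eq_sub, ← mul_sub, abs_mul, abs_of_pos Real.two_pi_pos]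
    exact mul_lt_of_lt_one_right Real.two_pi_pos
      (abs_lt.2 ⟨by linarith [hs.1, ht.2], by linarith [hs.2, ht.1]⟩)

theorem image_circleMap_two_pi_mul_add (θ : ℝ) :
    (fun t => circleMap 0 1 (2 * Real.pi * t + θ)) '' Icc 0 1 = sphere 0 1 := by
  have himage : (fun t => 2 * Real.pi * t + θ) '' Icc 0 1 = Icc θ (θ + 2 * Real.pi) := by
    rw [image_affine_Icc' Real.two_pi_pos, mul_zero, zero_add, mul_one, add_comm]
  rw [← image_image (circleMap 0 1) (fun t => 2 * Real.pi * t + θ), himage,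
    (periodic_circleMap 0 1).image_Icc Real.two_pi_pos, range_circleMap, abs_one]

theorem isJordanCurve_image_of_loop {ψ : ℝ → ℂ} (hψ : ContinuousOn ψ (Icc 0 1))
    (hinj : InjOn ψ (Ico 0 1)) (hloop : ψ 0 = ψ 1) : IsJordanCurve (ψ '' Icc 0 1) := by
  let c : ℝ → ℂ := fun t => circleMap 0 1 (2 * Real.pi * t + 0)
  have hc : c '' Icc 0 1 = sphere 0 1 := image_circleMap_two_pi_mul_add 0
  have hc_inj : InjOn c (Ico 0 1) := injOn_circleMap_two_pi_mul_add 0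
  have hc1 : c 1 = c 0 := by simp [c, circleMap]
  have hmem : ∀ t ∈ Icc (0 : ℝ) 1, ∃ s ∈ Ico (0 : ℝ) 1, c s = c t ∧ ψ s = ψ t := fun t ht => by
    rcases ht.2.eq_or_lt with rfl | h
    · exact ⟨0, by simp, hc1.symm, hloop⟩
    · exact ⟨t, ⟨ht.1, h⟩, rfl, rfl⟩
  have hφ : ∀ t ∈ Icc (0 : ℝ) 1, (ψ ∘ Function.invFunOn c (Ico 0 1)) (c t) = ψ t := fun t ht => by
    obtain ⟨s, hs, hst, hψst⟩ := hmem t ht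
    rw [← hst, Function.comp_apply, hc_inj.leftInvOn_invFunOn hs, hψst]
  refine ⟨ψ ∘ Function.invFunOn c (Ico 0 1), ?_, ?_, ?_⟩ <;> rw [← hc]
  · exact continuousOn_image_of_comp isCompact_Icc (by fun_prop) (hψ.congr hφ)
  · rintro _ ⟨s, hs, rfl⟩ _ ⟨t, ht, rfl⟩ h
    obtain ⟨s', hs', hcs, -⟩ := hmem s hs
    obtain ⟨t', ht', hct, -⟩ := hmem t ht
    rw [← hcs, ← hct, hφ s' (Ico_subset_Icc_self hs'), hφ t' (Ico_subset_Icc_self ht')] at h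
    rw [← hcs, ← hct, hinj hs' ht' h]
  · rw [image_image]
    exact image_congr fun t ht => (hφ t ht).symm

theorem IsJordanCurve.exists_loop {J : Set ℂ} (hJ : IsJordanCurve J) {z : ℂ} (hz : z ∈ J) :
    ∃ ψ : ℝ → ℂ, Continuous ψ ∧ InjOn ψ (Ico 0 1) ∧ ψ 0 = z ∧ ψ 1 = z ∧ ψ '' Icc 0 1 = J := by
  obtain ⟨φ, hφ, hinj, rfl⟩ := hJ
  obtain ⟨w, hw, rfl⟩ := hz
  obtain ⟨θ, hθ⟩ : w ∈ range (circleMap 0 1) := by rwa [range_circleMap, abs_one]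
  have hmem : ∀ t, circleMap 0 1 t ∈ sphere (0 : ℂ) 1 := circleMap_mem_sphere 0 zero_le_one
  refine ⟨fun t => φ (circleMap 0 1 (2 * Real.pi * t + θ)),
    hφ.comp_continuous (by fun_prop) fun t => hmem _,
    hinj.comp (injOn_circleMap_two_pi_mul_add θ) fun t _ => hmem _, ?_, ?_, ?_⟩
  · simp only [mul_zero, zero_add, hθ]
  · simp only [mul_one, add_comm _ θ, periodic_circleMap 0 1 θ, hθ]
  · rw [← image_image φ (fun t => circleMap 0 1 (2 * Real.pi * t + θ)),
      image_circleMap_two_pi_mul_add]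

end JordanCurves
section Arcs

/-- `A` is an arc from `a` to `b`: the range of an injective path. -/
def IsArc (A : Set ℂ) (a b : ℂ) : Prop :=
  ∃ p : Path a b, Function.Injective p ∧ range p = A

variable {A B : Set ℂ} {a b c : ℂ}

theorem IsArc.left_mem (hA : IsArc A a b) : a ∈ A := by
  obtain ⟨p, -, rfl⟩ := hA
  exact ⟨0, p.source⟩

theorem IsArc.isCompact (hA : IsArc A a b) : IsCompact A := by
  obtain ⟨p, -, rfl⟩ := hA
  exact isCompact_range p.continuous

theorem IsArc.isPreconnected (hA : IsArc A a b) : IsPreconnected A := by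
  obtain ⟨p, -, rfl⟩ := hA
  exact isPreconnected_range p.continuous

theorem IsArc.isPreconnected_compl (hA : IsArc A a b) : IsPreconnected Aᶜ := by
  obtain ⟨p, hp, rfl⟩ := hA
  exact isPreconnected_compl_range_path p hp

theorem isArc_segment (hab : a ≠ b) : IsArc (segment ℝ a b) a b :=
  ⟨Path.segment a b, Path.segment_injective_of_ne hab, Path.range_segment a b⟩

theorem isArc_image_Icc {γ : ℝ → ℂ} {s t : ℝ} (hst : s < t) (hγ : ContinuousOn γ (Icc s t))
    (hinj : InjOn γ (Icc s t)) : IsArc (γ '' Icc s t) (γ s) (γ t) := by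
  have himage : AffineMap.lineMap s t '' Icc (0 : ℝ) 1 = Icc s t := by
    rw [← segment_eq_image_lineMap, segment_eq_Icc hst.le]
  have hmem : ∀ u : unitInterval, AffineMap.lineMap s t (u : ℝ) ∈ Icc s t := fun u =>
    himage ▸ mem_image_of_mem _ u.2
  refine ⟨⟨⟨fun u => γ (AffineMap.lineMap s t (u : ℝ)), hγ.comp_continuous (by fun_prop) hmem⟩,
    by simp, by simp⟩, fun u v h => ?_, ?_⟩
  · exact Subtype.ext (AffineMap.lineMap_injective ℝ hst.ne (hinj (hmem u) (hmem v) h))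
  · exact (image_eq_range (fun u => γ (AffineMap.lineMap s t u)) _).symm.trans
      (by rw [← himage, image_image])

theorem eq_or_exists_of_trans_apply_eq {p : Path a b} {q : Path b c} (hp : Function.Injective p)
    (hq : Function.Injective q) {s t : unitInterval} (hst : s ≤ t)
    (h : p.trans q s = p.trans q t) :
    s = t ∨ ∃ u : unitInterval, u ≠ 0 ∧ q u ∈ range p ∧ (t : ℝ) = (u + 1) / 2 := by
  rw [Path.trans_apply, Path.trans_apply] at h
  split_ifs at h with hs ht ht
  · have := congrArg Subtype.val (hp h)
    exact Or.inl (Subtype.ext (by simpa using this))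
  · refine Or.inr ⟨_, fun hu => ht ?_, ⟨_, h⟩, ?_⟩
    · have := congrArg Subtype.val hu
      simp only [Set.Icc.coe_zero] at this
      linarith
    · simp
  · exact absurd (le_trans (show (s : ℝ) ≤ t from hst) ht) hs
  · have := congrArg Subtype.val (hq h)
    exact Or.inl (Subtype.ext (by simpa using this))

theorem IsArc.union (hA : IsArc A a b) (hB : IsArc B b c) (hAB : A ∩ B ⊆ {b}) :
    IsArc (A ∪ B) a c := by
  obtain ⟨p, hp, rfl⟩ := hA
  obtain ⟨q, hq, rfl⟩ := hB
  have key : ∀ s t : unitInterval, s ≤ t → p.trans q s = p.trans q t → s = t := by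
    intro s t hst h
    refine (eq_or_exists_of_trans_apply_eq hp hq hst h).resolve_right ?_
    rintro ⟨u, hu, hup, -⟩
    exact hu (hq ((hAB ⟨hup, mem_range_self u⟩).trans q.source.symm))
  refine ⟨p.trans q, fun s t h => ?_, Path.trans_range p q⟩
  exact (le_total s t).elim (fun hst => key s t hst h) fun hts => (key t s hts h.symm).symm

theorem IsArc.isJordanCurve_union (hA : IsArc A a b) (hB : IsArc B b a) (hAB : A ∩ B ⊆ {a, b}) :
    IsJordanCurve (A ∪ B) := by
  obtain ⟨p, hp, rfl⟩ := hA
  obtain ⟨q, hq, rfl⟩ := hB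
  have key : ∀ s t : unitInterval, s ≤ t → (t : ℝ) ≠ 1 → p.trans q s = p.trans q t → s = t := by
    intro s t hst ht h
    refine (eq_or_exists_of_trans_apply_eq hp hq hst h).resolve_right ?_
    rintro ⟨u, hu, hup, htu⟩
    rcases hAB ⟨hup, mem_range_self u⟩ with h1 | h0
    · rw [hq (h1.trans q.target.symm)] at htu
      exact ht (by simpa using htu)
    · exact hu (hq (h0.trans q.source.symm))
  have himage : (p.trans q).extend '' Icc 0 1 = range p ∪ range q := by
    rw [← Path.trans_range, image_eq_range]
    exact congrArg range (funext fun t => (p.trans q).extend_apply t.2)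
  rw [← himage]
  refine isJordanCurve_image_of_loop (p.trans q).extend.continuous.continuousOn ?_ (by simp)
  intro s hs t ht h
  rw [(p.trans q).extend_apply (Ico_subset_Icc_self hs),
    (p.trans q).extend_apply (Ico_subset_Icc_self ht)] at h
  rcases le_total s t with hst | hts
  · exact Subtype.ext_iff.1 (key _ _ hst ht.2.ne h)
  · exact (Subtype.ext_iff.1 (key _ _ hts hs.2.ne h.symm)).symm

theorem IsJordanCurve.frontier_eq {J W : Set ℂ} (hJ : IsJordanCurve J) (hWJ : frontier W ⊆ J)
    (hW : (W ∩ Jᶜ).Nonempty) (hW' : (Wᶜ ∩ Jᶜ).Nonempty) : frontier W = J := by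
  refine hWJ.antisymm fun z hz => by_contra fun hzW => ?_
  obtain ⟨ψ, hψ, hinj, hψ0, hψ1, rfl⟩ := hJ.exists_loop hz
  have hnear : ∀ t, ψ t = z → ∀ᶠ s in 𝓝 t, ψ s ∉ frontier W := fun t ht =>
    hψ.continuousAt.eventually (isClosed_frontier.isOpen_compl.mem_nhds (ht ▸ hzW))
  obtain ⟨δ₀, hδ₀, h0⟩ := Metric.eventually_nhds_iff.1 (hnear 0 hψ0)
  obtain ⟨δ₁, hδ₁, h1⟩ := Metric.eventually_nhds_iff.1 (hnear 1 hψ1)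
  obtain ⟨δ, hδ, hδlt⟩ := exists_between (lt_min (lt_min hδ₀ hδ₁) (by norm_num : (0 : ℝ) < 1 / 2))
  rw [lt_min_iff, lt_min_iff] at hδlt
  have hA : IsArc (ψ '' Icc δ (1 - δ)) (ψ δ) (ψ (1 - δ)) :=
    isArc_image_Icc (by linarith) hψ.continuousOn
      (hinj.mono ((Icc_subset_Ico_iff (by linarith)).2 ⟨hδ.le, by linarith⟩))
  have hAJ : ψ '' Icc δ (1 - δ) ⊆ ψ '' Icc 0 1 :=
    image_mono (Icc_subset_Icc hδ.le (by linarith))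
  have hfr : Disjoint (ψ '' Icc δ (1 - δ))ᶜ (frontier W) := by
    rw [disjoint_compl_left_iff_subset]
    intro x hx
    obtain ⟨t, ht, rfl⟩ := hWJ hx
    refine mem_image_of_mem _ ⟨?_, ?_⟩ <;> by_contra! hlt
    · exact h0 (by rw [Real.dist_eq, abs_of_nonneg (by linarith [ht.1])]; linarith) hx
    · exact h1 (by rw [Real.dist_eq, abs_of_nonpos (by linarith [ht.2])]; linarith) hx
  obtain ⟨x, hxW, hxJ⟩ := hW
  obtain ⟨y, hyW, hyJ⟩ := hW'
  exact hyW (subset_of_isPreconnected_of_disjoint_frontier hA.isPreconnected_compl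
    ⟨x, fun h => hxJ (hAJ h), hxW⟩ hfr fun h => hyJ (hAJ h))

end Arcs
section Subarcs

variable {A J : Set ℂ} {a b : ℂ}

theorem exists_range_eq_Icc_endpoints {f : unitInterval → ℝ} (hf : Continuous f)
    (hinj : Function.Injective f) :
    ∃ s t : unitInterval, (s = 0 ∨ s = 1) ∧ (t = 0 ∨ t = 1) ∧ range f = Icc (f s) (f t) := by
  rcases hf.strictMono_of_inj_boundedOrder' hinj with h | h
  · refine ⟨0, 1, by simp, by simp, Subset.antisymm ?_ (intermediate_value_univ 0 1 hf)⟩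
    exact range_subset_iff.2 fun x => ⟨h.monotone bot_le, h.monotone le_top⟩
  · refine ⟨1, 0, by simp, by simp, Subset.antisymm ?_ (intermediate_value_univ 1 0 hf)⟩
    exact range_subset_iff.2 fun x => ⟨h.antitone le_top, h.antitone bot_le⟩

theorem IsArc.exists_eq_image_Icc (hA : IsArc A a b) {ψ : ℝ → ℂ} (hψ : Continuous ψ)
    (hinj : InjOn ψ (Ioo 0 1)) (h0 : ψ 0 ∉ A) (h1 : ψ 1 ∉ A) (hAψ : A ⊆ ψ '' Icc 0 1) :
    ∃ u v, u ∈ Ioo (0 : ℝ) 1 ∧ v ∈ Ioo (0 : ℝ) 1 ∧ ψ u ∈ ({a, b} : Set ℂ) ∧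
      ψ v ∈ ({a, b} : Set ℂ) ∧ A = ψ '' Icc u v := by
  let h : ℂ → ℝ := Function.invFunOn ψ (Ioo 0 1)
  have hleft : ∀ t ∈ Ioo (0 : ℝ) 1, h (ψ t) = t := hinj.leftInvOn_invFunOn
  have hmem : ∀ t ∈ Icc (0 : ℝ) 1, ψ t ∈ A → t ∈ Ioo (0 : ℝ) 1 := fun t ht htA =>
    ⟨ht.1.lt_of_ne fun e => h0 (e ▸ htA), ht.2.lt_of_ne fun e => h1 (e ▸ htA)⟩
  have hA_image : ψ '' (Icc 0 1 ∩ ψ ⁻¹' A) = A := by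
    rw [image_inter_preimage, inter_eq_right.2 hAψ]
  have hcont : ContinuousOn h A := by
    rw [← hA_image]
    exact continuousOn_image_of_comp (isCompact_Icc.inter_right
      (hA.isCompact.isClosed.preimage hψ)) hψ.continuousOn
      (continuousOn_id.congr fun t ht => hleft t (hmem t ht.1 ht.2))
  have hright : ∀ z ∈ A, h z ∈ Ioo (0 : ℝ) 1 ∧ ψ (h z) = z := fun z hz => by
    obtain ⟨t, ht, rfl⟩ := hAψ hz
    rw [hleft t (hmem t ht hz)]
    exact ⟨hmem t ht hz, rfl⟩
  obtain ⟨p, hp, rfl⟩ := hA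
  have hpA : ∀ t, p t ∈ range p := mem_range_self
  obtain ⟨s, t, hs, ht, hst⟩ := exists_range_eq_Icc_endpoints (f := fun t => h (p t))
    (hcont.comp_continuous p.continuous hpA)
    fun x y hxy => hp (by rw [← (hright _ (hpA x)).2, ← (hright _ (hpA y)).2]; exact congrArg ψ hxy)
  have hend : ∀ s, s = 0 ∨ s = 1 → ψ (h (p s)) ∈ ({a, b} : Set ℂ) := fun s hs => by
    rw [(hright _ (hpA s)).2]
    rcases hs with rfl | rfl <;> simp
  refine ⟨h (p s), h (p t), (hright _ (hpA s)).1, (hright _ (hpA t)).1, hend s hs, hend t ht, ?_⟩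
  rw [← hst, ← range_comp]
  exact congrArg range (funext fun x => (hright _ (hpA x)).2.symm)

theorem IsJordanCurve.exists_loop_of_arc (hJ : IsJordanCurve J) (hA : IsArc A a b) (hAJ : A ⊆ J)
    (hne : (J \ A).Nonempty) :
    ∃ ψ : ℝ → ℂ, ∃ u v : ℝ, Continuous ψ ∧ ψ 0 = ψ 1 ∧ u ∈ Ioo (0 : ℝ) 1 ∧ v ∈ Ioo (0 : ℝ) 1 ∧
      ψ u ∈ ({a, b} : Set ℂ) ∧ ψ v ∈ ({a, b} : Set ℂ) ∧ A = ψ '' Icc u v ∧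
      J \ A = ψ '' Ico 0 u ∪ ψ '' Ioc v 1 := by
  obtain ⟨z, hzJ, hzA⟩ := hne
  obtain ⟨ψ, hψ, hinj, hψ0, hψ1, rfl⟩ := hJ.exists_loop hzJ
  obtain ⟨u, v, hu, hv, hua, hva, hA_eq⟩ := hA.exists_eq_image_Icc hψ
    (hinj.mono Ioo_subset_Ico_self) (hψ0 ▸ hzA) (hψ1 ▸ hzA) hAJ
  refine ⟨ψ, u, v, hψ, hψ0.trans hψ1.symm, hu, hv, hua, hva, hA_eq, ?_⟩
  rw [← image_union]
  refine Subset.antisymm ?_ ?_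
  · rintro _ ⟨⟨t, ht, rfl⟩, htA⟩
    refine mem_image_of_mem ψ ?_
    by_contra! h
    simp only [mem_union, mem_Ico, mem_Ioc, ht.1, ht.2, true_and, and_true, not_or, not_lt] at h
    exact htA (hA_eq ▸ mem_image_of_mem ψ h)
  · rintro _ ⟨t, ht, rfl⟩
    have ht01 : t ∈ Icc (0 : ℝ) 1 := by
      rcases ht with ht | ht
      · exact ⟨ht.1, (ht.2.trans hu.2).le⟩
      · exact ⟨(hv.1.trans ht.1).le, ht.2⟩
    refine ⟨mem_image_of_mem ψ ht01, fun htA => ?_⟩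
    obtain ⟨s, hs, hst⟩ := hA_eq ▸ htA
    have hs01 : s ∈ Ico (0 : ℝ) 1 := ⟨hu.1.le.trans hs.1, hs.2.trans_lt hv.2⟩
    rcases ht01.2.eq_or_lt with rfl | ht1
    · exact hzA (hψ1 ▸ htA)
    · rw [hinj hs01 ⟨ht01.1, ht1⟩ hst] at hs
      rcases ht with ht | ht
      · exact hs.1.not_gt ht.2
      · exact hs.2.not_gt ht.1

theorem IsJordanCurve.isPreconnected_diff_arc (hJ : IsJordanCurve J) (hA : IsArc A a b)
    (hAJ : A ⊆ J) : IsPreconnected (J \ A) := by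
  rcases (J \ A).eq_empty_or_nonempty with h | h
  · exact h ▸ isPreconnected_empty
  obtain ⟨ψ, u, v, hψ, hψ01, hu, hv, -, -, -, hdiff⟩ := hJ.exists_loop_of_arc hA hAJ h
  rw [hdiff]
  exact (isPreconnected_Ico.image _ hψ.continuousOn).union (ψ 0)
    (mem_image_of_mem ψ ⟨le_rfl, hu.1⟩) (hψ01 ▸ mem_image_of_mem ψ ⟨hv.2, le_rfl⟩)
    (isPreconnected_Ioc.image _ hψ.continuousOn)

theorem IsJordanCurve.isClosed_diff_arc_union (hJ : IsJordanCurve J) (hA : IsArc A a b)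
    (hAJ : A ⊆ J) : IsClosed (J \ A ∪ {a, b}) := by
  rcases (J \ A).eq_empty_or_nonempty with h | h
  · rw [h, empty_union]
    exact (toFinite _).isClosed
  obtain ⟨ψ, u, v, hψ, -, hu, hv, hua, hva, -, hdiff⟩ := hJ.exists_loop_of_arc hA hAJ h
  have hclosed : J \ A ∪ {a, b} = ψ '' Icc 0 u ∪ ψ '' Icc v 1 ∪ {a, b} := by
    rw [hdiff, ← Ico_insert_right hu.1.le, ← Ioc_insert_left hv.2.le, image_insert_eq,
      image_insert_eq]
    generalize ({a, b} : Set ℂ) = P at hua hva ⊢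
    rw [insert_union, union_insert, insert_union, insert_union,
      insert_eq_of_mem (mem_union_right _ hva), insert_eq_of_mem (mem_union_right _ hua)]
  rw [hclosed]
  exact ((isCompact_Icc.image hψ).isClosed.union (isCompact_Icc.image hψ).isClosed).union
    (toFinite _).isClosed

theorem IsJordanCurve.isClosed_diff_image_Ioo (hJ : IsJordanCurve J) {γ : ℝ → ℂ} {s t : ℝ}
    (hst : s < t) (hγ : ContinuousOn γ (Icc s t)) (hinj : InjOn γ (Icc s t))
    (hγJ : γ '' Icc s t ⊆ J) : IsClosed (J \ γ '' Ioo s t) := by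
  have hends : γ '' Icc s t = γ '' Ioo s t ∪ {γ s, γ t} := by
    rw [← image_pair, ← image_union, Ioo_union_both hst.le]
  have hdisj : Disjoint (γ '' Ioo s t) {γ s, γ t} := by
    rw [← image_pair, Set.disjoint_left]
    rintro _ ⟨x, hx, rfl⟩ ⟨y, hy, hxy⟩
    have hyst : y ∈ Icc s t := pair_subset (left_mem_Icc.2 hst.le) (right_mem_Icc.2 hst.le) hy
    rw [hinj hyst (Ioo_subset_Icc_self hx) hxy] at hy
    exact hy.elim hx.1.ne' hx.2.ne
  have : J \ γ '' Ioo s t = J \ γ '' Icc s t ∪ {γ s, γ t} := by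
    rw [hends] at hγJ ⊢
    rw [← Set.sdiff_sdiff, sdiff_union_of_subset]
    exact subset_sdiff.2 ⟨subset_union_right.trans hγJ, hdisj.symm⟩
  rw [this]
  exact hJ.isClosed_diff_arc_union (isArc_image_Icc hst hγ hinj) hγJ

end Subarcs
section Crossing

theorem sub_div_add_eq_smul (ζ : ℂ) (ε : ℝ) :
    (ζ - ε * Complex.I) / (ζ + ε * Complex.I) = (Complex.normSq (ζ + ε * Complex.I))⁻¹ •
      (⟨Complex.normSq ζ - ε * ε, -(2 * ε * ζ.re)⟩ : ℂ) := by
  rw [div_eq_mul_inv, Complex.inv_def, ← mul_assoc, Complex.real_smul, mul_comm _ (Complex.mk _ _)]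
  congr 1
  apply Complex.ext <;> simp [Complex.normSq_apply] <;> ring

theorem add_mul_I_ne_zero {ζ : ℂ} {ε : ℝ} (hε : 0 < ε) (hζ : ζ.re ≠ 0 ∨ ε < ‖ζ‖) :
    ζ + ε * Complex.I ≠ 0 := fun h => by
  have hζε := eq_neg_of_add_eq_zero_left h
  rcases hζ with hζ | hζ
  · exact hζ (by simp [hζε])
  · exact hζ.ne' (by simp [hζε, abs_of_pos hε])

theorem sub_div_add_mem_slitPlane {ζ : ℂ} {ε : ℝ} (hε : 0 < ε) (hζ : ζ.re ≠ 0 ∨ ε < ‖ζ‖) :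
    (ζ - ε * Complex.I) / (ζ + ε * Complex.I) ∈ Complex.slitPlane := by
  have hpos := inv_pos.2 (Complex.normSq_pos.2 (add_mul_I_ne_zero hε hζ))
  rw [sub_div_add_eq_smul, Complex.mem_slitPlane_iff, Complex.smul_re, Complex.smul_im, smul_eq_mul,
    smul_eq_mul]
  rcases eq_or_ne ζ.re 0 with h0 | h0
  · refine Or.inl (mul_pos hpos (sub_pos.2 ?_))
    rw [Complex.normSq_eq_norm_sq, sq]
    have := hζ.resolve_left (not_not.2 h0)
    gcongr
  · exact Or.inr (mul_ne_zero hpos.ne' (neg_ne_zero.2 (by positivity)))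

theorem tendsto_sub_div_add_nhds_zero {ε : ℝ} (hε : 0 < ε) :
    Tendsto (fun s : ℝ => (s - ε * Complex.I) / (s + ε * Complex.I)) (𝓝 0) (𝓝 (-1)) := by
  have hI : (ε : ℂ) * Complex.I ≠ 0 := mul_ne_zero (by exact_mod_cast hε.ne') Complex.I_ne_zero
  have hcont : ContinuousAt (fun s : ℝ => (s - ε * Complex.I) / (s + ε * Complex.I)) 0 :=
    ContinuousAt.div (by fun_prop) (by fun_prop) (by simpa using hI)
  simpa [neg_div, div_self hI] using hcont.tendsto

theorem tendsto_log_sub_div_add_nhdsGT {ε : ℝ} (hε : 0 < ε) :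
    Tendsto (fun s : ℝ => Complex.log ((s - ε * Complex.I) / (s + ε * Complex.I))) (𝓝[>] 0)
      (𝓝 (-(Real.pi * Complex.I))) := by
  have hlog := Complex.tendsto_log_nhdsWithin_im_neg_of_re_neg_of_im_zero (z := -1) (by simp)
    (by simp)
  rw [norm_neg, norm_one, Real.log_one, Complex.ofReal_zero, zero_sub] at hlog
  refine hlog.comp (tendsto_nhdsWithin_iff.2
    ⟨(tendsto_sub_div_add_nhds_zero hε).mono_left nhdsWithin_le_nhds, ?_⟩)
  filter_upwards [self_mem_nhdsWithin] with s (hs : 0 < s)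
  have hpos := inv_pos.2 (Complex.normSq_pos.2 (add_mul_I_ne_zero (ζ := s) hε (Or.inl hs.ne')))
  rw [sub_div_add_eq_smul, Complex.smul_im]
  exact mul_neg_of_pos_of_neg hpos (neg_lt_zero.2 (mul_pos (by positivity) hs))

theorem tendsto_log_sub_div_add_nhdsLT {ε : ℝ} (hε : 0 < ε) :
    Tendsto (fun s : ℝ => Complex.log ((s - ε * Complex.I) / (s + ε * Complex.I))) (𝓝[<] 0)
      (𝓝 (Real.pi * Complex.I)) := by
  have hlog := Complex.tendsto_log_nhdsWithin_im_nonneg_of_re_neg_of_im_zero (z := -1) (by simp)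
    (by simp)
  rw [norm_neg, norm_one, Real.log_one, Complex.ofReal_zero, zero_add] at hlog
  refine hlog.comp (tendsto_nhdsWithin_iff.2
    ⟨(tendsto_sub_div_add_nhds_zero hε).mono_left nhdsWithin_le_nhds, ?_⟩)
  filter_upwards [self_mem_nhdsWithin] with s (hs : s < 0)
  rw [sub_div_add_eq_smul, Complex.smul_im]
  exact mul_nonneg (inv_nonneg.2 (Complex.normSq_nonneg _))
    (neg_nonneg.2 (mul_nonpos_of_nonneg_of_nonpos (by positivity) hs.le))

theorem segment_eq_image_midpoint_add_smul {E : Type*} [AddCommGroup E] [Module ℝ E] (w a : E) :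
    segment ℝ w a = (fun s : ℝ => midpoint ℝ w a + s • (a - w)) '' Icc (-(1 / 2)) (1 / 2) := by
  have : (fun s : ℝ => midpoint ℝ w a + s • (a - w)) =
      AffineMap.lineMap w a ∘ fun s : ℝ => s + 1 / 2 := by
    ext s
    rw [Function.comp_apply, AffineMap.lineMap_apply, midpoint_eq_smul_add, vsub_eq_sub,
      vadd_eq_add, invOf_eq_inv]
    module
  rw [this, image_comp, image_add_const_Icc, segment_eq_image_lineMap]
  norm_num

theorem isPreconnected_union_segment_sdiff_midpoint {A : Set ℂ} {w a : ℂ} (hA : IsPreconnected A)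
    (hw : w ∈ A) (ha : a ∈ A) (hm : midpoint ℝ w a ∉ A) :
    IsPreconnected ((A ∪ segment ℝ w a) \ {midpoint ℝ w a}) := by
  let φ : ℝ → ℂ := fun s => midpoint ℝ w a + s • (a - w)
  have hwa : a - w ≠ 0 := sub_ne_zero.2 fun h => hm (by rwa [h, midpoint_self])
  have hφ0 : ∀ s, φ s = midpoint ℝ w a ↔ s = 0 := fun s => by simp [φ, hwa]
  have hφc : Continuous φ := by fun_prop
  have hleft : φ (-(1 / 2)) = w := by
    simp only [φ, midpoint_eq_smul_add, invOf_eq_inv]; module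
  have hright : φ (1 / 2) = a := by
    simp only [φ, midpoint_eq_smul_add, invOf_eq_inv]; module
  have heq : (A ∪ segment ℝ w a) \ {midpoint ℝ w a} =
      A ∪ φ '' Ico (-(1 / 2)) 0 ∪ φ '' Ioc 0 (1 / 2) := by
    have hIcc : Icc (-(1 / 2) : ℝ) (1 / 2) \ {0} = Ico (-(1 / 2)) 0 ∪ Ioc 0 (1 / 2) := by
      ext s
      simp only [Set.mem_sdiff, mem_Icc, mem_singleton_iff, mem_union, mem_Ico, mem_Ioc]
      grind
    have hφ_diff : φ '' Icc (-(1 / 2)) (1 / 2) \ {midpoint ℝ w a} =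
        φ '' (Icc (-(1 / 2)) (1 / 2) \ {0}) := by
      ext z
      constructor
      · rintro ⟨⟨s, hs, rfl⟩, h⟩
        exact ⟨s, ⟨hs, fun h0 => h ((hφ0 s).2 h0)⟩, rfl⟩
      · rintro ⟨s, ⟨hs, h⟩, rfl⟩
        exact ⟨⟨s, hs, rfl⟩, fun h0 => h ((hφ0 s).1 h0)⟩
    rw [union_sdiff_distrib, sdiff_singleton_eq_self hm, segment_eq_image_midpoint_add_smul,
      hφ_diff, hIcc, image_union, union_assoc]
  rw [heq]
  refine (hA.union w hw (hleft ▸ mem_image_of_mem φ (by norm_num))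
    (isPreconnected_Ico.image φ hφc.continuousOn)).union a (Or.inl ha)
    (hright ▸ mem_image_of_mem φ (by norm_num)) (isPreconnected_Ioc.image φ hφc.continuousOn)

theorem re_div_ne_zero_or_lt_norm_div {A : Set ℂ} {w a z : ℂ} {ε : ℝ}
    (hε : ∀ z ∈ A, ε * ‖a - w‖ < ‖z - midpoint ℝ w a‖)
    (hz : z ∈ (A ∪ segment ℝ w a) \ {midpoint ℝ w a}) (hwa : a ≠ w) :
    ((z - midpoint ℝ w a) / (a - w)).re ≠ 0 ∨ ε < ‖(z - midpoint ℝ w a) / (a - w)‖ := by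
  have hwa' := sub_ne_zero.2 hwa
  obtain ⟨hzA | hz, hzm⟩ := hz
  · right
    rw [norm_div, lt_div_iff₀ (norm_pos_iff.2 hwa')]
    exact hε z hzA
  · left
    rw [segment_eq_image_midpoint_add_smul] at hz
    obtain ⟨s, -, rfl⟩ := hz
    rw [add_sub_cancel_left, Complex.real_smul, mul_div_cancel_right₀ _ hwa', Complex.ofReal_re]
    rintro rfl
    simp at hzm

theorem exists_eq_log_add_const_union_segment {A : Set ℂ} {w a : ℂ} {ε : ℝ} (hε0 : 0 < ε)
    (hAp : IsPreconnected A) (hw : w ∈ A) (ha : a ∈ A) (hm : midpoint ℝ w a ∉ A)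
    (hε : ∀ z ∈ A, ε * ‖a - w‖ < ‖z - midpoint ℝ w a‖) {g : ℂ → ℂ}
    (hg : ContinuousOn g (A ∪ segment ℝ w a))
    (hexp : ∀ z ∈ A ∪ segment ℝ w a, Complex.exp (g z) =
      (z - (midpoint ℝ w a + ε * Complex.I * (a - w))) /
        (z - (midpoint ℝ w a - ε * Complex.I * (a - w)))) :
    ∃ c, ∀ z ∈ (A ∪ segment ℝ w a) \ {midpoint ℝ w a}, g z =
      Complex.log (((z - midpoint ℝ w a) / (a - w) - ε * Complex.I) /
        ((z - midpoint ℝ w a) / (a - w) + ε * Complex.I)) + c := by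
  have hwa : a ≠ w := fun h => hm (by rwa [h, midpoint_self])
  have hwa' := sub_ne_zero.2 hwa
  let q : ℂ → ℂ := fun z => ((z - midpoint ℝ w a) / (a - w) - ε * Complex.I) /
    ((z - midpoint ℝ w a) / (a - w) + ε * Complex.I)
  have hslit : ∀ z ∈ (A ∪ segment ℝ w a) \ {midpoint ℝ w a}, q z ∈ Complex.slitPlane :=
    fun z hz => sub_div_add_mem_slitPlane hε0 (re_div_ne_zero_or_lt_norm_div hε hz hwa)
  have hq : ContinuousOn q ((A ∪ segment ℝ w a) \ {midpoint ℝ w a}) :=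
    ContinuousOn.div (by fun_prop) (by fun_prop) fun z hz =>
      add_mul_I_ne_zero hε0 (re_div_ne_zero_or_lt_norm_div hε hz hwa)
  refine exists_eq_add_const_of_exp_eq
    (isPreconnected_union_segment_sdiff_midpoint hAp hw ha hm) (hg.mono sdiff_subset)
    (hq.clog hslit) fun z hz => ?_
  rw [hexp z hz.1, Complex.exp_log (Complex.slitPlane_ne_zero (hslit z hz))]
  simp only [q]
  field_simp
  ring_nf

-- The principal branch jumps by `2πi` across the midpoint.
theorem not_hasContinuousLogOn_union_segment {A : Set ℂ} {w a : ℂ} {ε : ℝ} (hε0 : 0 < ε)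
    (hAp : IsPreconnected A) (hw : w ∈ A) (ha : a ∈ A) (hm : midpoint ℝ w a ∉ A)
    (hε : ∀ z ∈ A, ε * ‖a - w‖ < ‖z - midpoint ℝ w a‖) :
    ¬ HasContinuousLogOn (fun z => (z - (midpoint ℝ w a + ε * Complex.I * (a - w))) /
      (z - (midpoint ℝ w a - ε * Complex.I * (a - w)))) (A ∪ segment ℝ w a) := by
  rintro ⟨g, hg, hexp⟩
  obtain ⟨c, hc⟩ := exists_eq_log_add_const_union_segment hε0 hAp hw ha hm hε hg hexp
  have hwa : a - w ≠ 0 := sub_ne_zero.2 fun h => hm (by rwa [h, midpoint_self])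
  let φ : ℝ → ℂ := fun s => midpoint ℝ w a + s • (a - w)
  have hφ : ∀ᶠ s in 𝓝 0, φ s ∈ A ∪ segment ℝ w a := by
    filter_upwards [Icc_mem_nhds (by norm_num : -(1 / 2) < (0 : ℝ))
      (by norm_num : (0 : ℝ) < 1 / 2)]
      with s hs
    rw [segment_eq_image_midpoint_add_smul]
    exact Or.inr (mem_image_of_mem φ hs)
  have hφ0 : Tendsto φ (𝓝 0) (𝓝 (midpoint ℝ w a)) :=
    Continuous.tendsto' (by fun_prop) 0 _ (by simp [φ])
  have hgφ : Tendsto (fun s => g (φ s)) (𝓝 0) (𝓝 (g (midpoint ℝ w a))) :=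
    (hg _ (Or.inr (midpoint_mem_segment w a))).tendsto.comp
      (tendsto_nhdsWithin_iff.2 ⟨hφ0, hφ⟩)
  have hval : ∀ᶠ s : ℝ in 𝓝[≠] 0,
      Complex.log ((s - ε * Complex.I) / (s + ε * Complex.I)) + c = g (φ s) := by
    filter_upwards [hφ.filter_mono nhdsWithin_le_nhds, self_mem_nhdsWithin] with s hs (hs0 : s ≠ 0)
    rw [hc (φ s) ⟨hs, by simp [φ, hs0, hwa]⟩]
    simp only [φ, add_sub_cancel_left, Complex.real_smul, mul_div_cancel_right₀ _ hwa]
  have hGT := tendsto_nhds_unique (((tendsto_log_sub_div_add_nhdsGT hε0).add_const c).congr'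
    (hval.filter_mono (nhdsGT_le_nhdsNE 0))) (hgφ.mono_left nhdsWithin_le_nhds)
  have hLT := tendsto_nhds_unique (((tendsto_log_sub_div_add_nhdsLT hε0).add_const c).congr'
    (hval.filter_mono (nhdsLT_le_nhdsNE 0))) (hgφ.mono_left nhdsWithin_le_nhds)
  refine Complex.two_pi_I_ne_zero ?_
  linear_combination hLT - hGT

theorem not_isPreconnected_compl_union_segment {A : Set ℂ} {w a : ℂ} (hA : IsClosed A)
    (hAp : IsPreconnected A) (hw : w ∈ A) (ha : a ∈ A) (hm : midpoint ℝ w a ∉ A) :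
    ¬ IsPreconnected (A ∪ segment ℝ w a)ᶜ := by
  intro hpre
  have hwa : a ≠ w := fun h => hm (by rwa [h, midpoint_self])
  have hwa' := sub_ne_zero.2 hwa
  obtain ⟨δ, hδ, hball⟩ := Metric.isOpen_iff.1 hA.isOpen_compl _ hm
  obtain ⟨ε, hε0, hε⟩ := exists_pos_mul_lt hδ ‖a - w‖
  have hεA : ∀ z ∈ A, ε * ‖a - w‖ < ‖z - midpoint ℝ w a‖ := fun z hz => by
    rw [mul_comm, ← dist_eq_norm z]
    exact hε.trans_le (not_lt.1 fun h => hball h hz)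
  have hmem : ∀ ζ : ℂ, ζ.re = 0 → ‖ζ‖ = ε →
      midpoint ℝ w a + ζ * (a - w) ∈ (A ∪ segment ℝ w a)ᶜ := fun ζ hre hnorm hζ => by
    have hζ0 : ζ ≠ 0 := norm_ne_zero_iff.1 (hnorm ▸ hε0.ne')
    have := re_div_ne_zero_or_lt_norm_div hεA ⟨hζ, by simp [hζ0, hwa']⟩ hwa
    rw [add_sub_cancel_left, mul_div_cancel_right₀ _ hwa'] at this
    exact this.elim (fun h => h hre) fun h => h.ne' hnorm
  have hu := hmem (ε * Complex.I) (by simp) (by simp [hε0.le])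
  have hv := hmem (-(ε * Complex.I)) (by simp) (by simp [hε0.le])
  rw [neg_mul, ← sub_eq_add_neg] at hv
  have hopen : IsOpen (A ∪ segment ℝ w a)ᶜ :=
    (hA.union (isArc_segment hwa.symm).isCompact.isClosed).isOpen_compl
  have hpath := hopen.isConnected_iff_isPathConnected.1 ⟨⟨_, hu⟩, hpre⟩
  exact not_hasContinuousLogOn_union_segment hε0 hAp hw ha hm hεA
    (hasContinuousLogOn_sub_div_sub_of_joinedIn (hpath.joinedIn _ hv _ hu))

end Crossing

section VisiblePoints

theorem exists_mem_frontier_segment_sdiff_subset {E : Type*} [NormedAddCommGroup E]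
    [NormedSpace ℝ E] {Ω : Set E} (hΩ : IsOpen Ω) {x y : E} (hx : x ∈ Ω) (hy : y ∉ Ω) :
    ∃ b ∈ segment ℝ x y, b ∈ frontier Ω ∧ segment ℝ x b \ {b} ⊆ Ω := by
  have hcompact : IsCompact (segment ℝ x y ∩ Ωᶜ) := by
    rw [← Path.range_segment]
    exact (isCompact_range (Path.segment x y).continuous).inter_right hΩ.isClosed_compl
  obtain ⟨b, ⟨hb, hbΩ⟩, hdist⟩ := hcompact.exists_infDist_eq_dist ⟨y, right_mem_segment ℝ x y, hy⟩ x
  have hsub : segment ℝ x b \ {b} ⊆ Ω := fun z ⟨hz, hzb⟩ => by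
    by_contra hzΩ
    have hle : infDist x (segment ℝ x y ∩ Ωᶜ) ≤ dist x z := infDist_le_dist_of_mem
      ⟨(convex_segment x y).segment_subset (left_mem_segment ℝ x y) hb hz, hzΩ⟩
    have hadd := dist_add_dist_of_mem_segment hz
    have hpos := dist_pos.2 hzb
    linarith
  refine ⟨b, hb, ?_, hsub⟩
  have hxb : x ≠ b := fun h => hbΩ (h ▸ hx)
  have hopen : openSegment ℝ x b ⊆ Ω := fun z hz =>
    hsub ⟨openSegment_subset_segment ℝ x b hz, fun h => hxb (right_mem_openSegment_iff.1 (h ▸ hz))⟩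
  rw [hΩ.frontier_eq]
  exact ⟨closure_mono hopen (closure_openSegment (𝕜 := ℝ) x b ▸ right_mem_segment ℝ x b), hbΩ⟩

theorem segment_inter_segment_subset_singleton {E : Type*} [AddCommGroup E] [Module ℝ E]
    {Ω : Set E} {x a b : E} (ha : a ∉ Ω) (hb : b ∉ Ω) (hab : a ≠ b)
    (hxa : segment ℝ x a \ {a} ⊆ Ω) (hxb : segment ℝ x b \ {b} ⊆ Ω) :
    segment ℝ x a ∩ segment ℝ x b ⊆ {x} := by
  rintro z ⟨hza, hzb⟩
  by_contra hzx
  rw [mem_segment_iff_wbtw] at hza hzb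
  have hray : SameRay ℝ (a -ᵥ x) (b -ᵥ x) :=
    (hza.sameRay_vsub_left.symm).trans hzb.sameRay_vsub_left fun h =>
      absurd (vsub_eq_zero_iff_eq.1 h) hzx
  rcases wbtw_total_of_sameRay_vsub_left hray with h | h
  · exact ha (hxb ⟨mem_segment_iff_wbtw.2 h, hab⟩)
  · exact hb (hxa ⟨mem_segment_iff_wbtw.2 h, hab.symm⟩)

theorem dense_setOf_notMem_segment {a b : ℂ} (hab : a ≠ b) : Dense {x | a ∉ segment ℝ x b} := by
  have hba : b - a ≠ 0 := sub_ne_zero.2 hab.symm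
  let e : ℂ ≃ₜ ℂ :=
    (Homeomorph.subRight a).trans (Homeomorph.mulRight₀ (b - a)⁻¹ (inv_ne_zero hba))
  have hdense : Dense {x | (e x).im ≠ 0} :=
    ((dense_compl_singleton (0 : ℝ)).preimage Complex.isOpenMap_im).preimage e.isOpenMap
  refine hdense.mono ?_
  rintro x hx ⟨s, t, -, -, hst, h⟩
  refine hx ?_
  have hcomb : s * e x + t = 0 := by
    have hsum : (s : ℂ) + t = 1 := by exact_mod_cast hst
    have hdiff : s * (x - a) + t * (b - a) = 0 := by
      simp only [Complex.real_smul] at h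
      linear_combination h - a * hsum
    change (s : ℂ) * ((x - a) * (b - a)⁻¹) + t = 0
    field_simp
    linear_combination hdiff
  have him : s * (e x).im = 0 := by simpa using congrArg Complex.im hcomb
  refine (mul_eq_zero.1 him).resolve_left ?_
  rintro rfl
  rw [Complex.ofReal_zero, zero_mul, zero_add, Complex.ofReal_eq_zero] at hcomb
  simp [hcomb] at hst

theorem segment_sdiff_singleton_subset_ball {E : Type*} [NormedAddCommGroup E] [NormedSpace ℝ E]
    {x₀ x a : E} (hx : x ∈ ball x₀ (dist a x₀)) : segment ℝ x a \ {a} ⊆ ball x₀ (dist a x₀) := by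
  rintro z ⟨hz, hza⟩
  have hd : dist a x₀ ≠ 0 := (pos_of_mem_ball hx).ne'
  rw [← insert_endpoints_openSegment] at hz
  rcases hz with rfl | rfl | hz
  · exact hx
  · exact absurd rfl hza
  · have := (convex_ball x₀ (dist a x₀)).openSegment_interior_closure_subset_interior
      (by rwa [isOpen_ball.interior_eq]) (by rw [closure_ball x₀ hd]; exact mem_closedBall.2 le_rfl)
      hz
    rwa [isOpen_ball.interior_eq] at this

-- `a` is a boundary point nearest to some `x₀ ∈ Ω`, and `b` is the first boundary point on the way
-- from a point close to `x₀` to another boundary point.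
theorem exists_visible_pair {Ω : Set ℂ} (hΩ : IsOpen Ω) {y : ℂ} (hy : AccPt y (𝓟 (frontier Ω)))
    {r : ℝ} (hr : 0 < r) :
    ∃ x ∈ Ω ∩ ball y r, ∃ a ∈ frontier Ω ∩ ball y r, ∃ b ∈ frontier Ω ∩ ball y r, a ≠ b ∧
      segment ℝ x a \ {a} ⊆ Ω ∧ segment ℝ x b \ {b} ⊆ Ω := by
  have hyΩ : y ∈ frontier Ω := isClosed_frontier.closure_subset hy.clusterPt.mem_closure
  obtain ⟨b₀, ⟨hb₀, hb₀Ω⟩, hb₀y⟩ := accPt_iff_nhds.1 hy _ (ball_mem_nhds y hr)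
  have hb₀pos := dist_pos.2 hb₀y
  obtain ⟨x₀, hx₀, hx₀y⟩ := Metric.mem_closure_iff.1 (frontier_subset_closure hyΩ)
    (min r (dist b₀ y) / 2) (by positivity)
  obtain ⟨a, haΩ, ha⟩ := isClosed_frontier.exists_infDist_eq_dist ⟨y, hyΩ⟩ x₀
  rw [dist_comm x₀] at ha
  have hay : dist a y < min r (dist b₀ y) := by
    have := ha ▸ infDist_le_dist_of_mem (x := x₀) hyΩ
    have := dist_triangle a x₀ y
    rw [dist_comm x₀] at *
    linarith
  have hab₀ : a ≠ b₀ := fun h => (hay.trans_le (min_le_right _ _)).ne (h ▸ rfl)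
  have hpos : 0 < dist a x₀ := dist_pos.2 fun h => (hΩ.frontier_eq ▸ haΩ).2 (h ▸ hx₀)
  have hball : ball x₀ (dist a x₀) ⊆ Ω :=
    subset_of_isPreconnected_of_disjoint_frontier (convex_ball x₀ _).isPreconnected
      ⟨x₀, mem_ball_self hpos, hx₀⟩ (ha ▸ disjoint_ball_infDist)
  have hx₀r : x₀ ∈ ball y r := by
    rw [mem_ball']
    linarith [min_le_left r (dist b₀ y)]
  obtain ⟨x, ⟨hx, hxy⟩, hax⟩ := (dense_setOf_notMem_segment hab₀).inter_open_nonempty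
    (ball x₀ (dist a x₀) ∩ ball y r) (isOpen_ball.inter isOpen_ball) ⟨x₀, mem_ball_self hpos, hx₀r⟩
  obtain ⟨b, hb, hbΩ, hbs⟩ := exists_mem_frontier_segment_sdiff_subset hΩ (hball hx)
    (hΩ.frontier_eq ▸ hb₀Ω).2
  refine ⟨x, ⟨hball hx, hxy⟩, a, ⟨haΩ, hay.trans_le (min_le_left _ _)⟩, b,
    ⟨hbΩ, (convex_ball y r).segment_subset hxy hb₀ hb⟩, ?_,
    (segment_sdiff_singleton_subset_ball hx).trans hball, hbs⟩
  rintro rfl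
  exact hax hb

end VisiblePoints

section CrossCut

theorem IsJordanCurve.exists_isJordanDomain {J : Set ℂ} (hJ : IsJordanCurve J)
    (hsep : ¬ IsPreconnected Jᶜ) : ∃ W, IsJordanDomain W ∧ frontier W = J := by
  have hJc : IsClosed J := hJ.isCompact.isClosed
  have hdomain : ∀ a b, a ∉ J → b ∉ J → b ∉ connectedComponentIn Jᶜ a →
      Bornology.IsBounded (connectedComponentIn Jᶜ a) → ∃ W, IsJordanDomain W ∧ frontier W = J := by
    intro a b ha hb hba hbdd
    have hfr : frontier (connectedComponentIn Jᶜ a) = J := by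
      refine hJ.frontier_eq ?_ ⟨a, mem_connectedComponentIn ha, ha⟩ ⟨b, hba, hb⟩
      exact (frontier_connectedComponentIn_subset_compl hJc.isOpen_compl a).trans_eq (compl_compl J)
    exact ⟨_, ⟨hJc.isOpen_compl.connectedComponentIn, isConnected_connectedComponentIn_iff.2 ha,
      hbdd, (congrArg IsJordanCurve hfr).mpr hJ⟩, hfr⟩
  obtain ⟨a, ha, b, hb, hab⟩ : ∃ a ∉ J, ∃ b ∉ J,
      connectedComponentIn Jᶜ a ≠ connectedComponentIn Jᶜ b := by
    by_contra! h
    exact hsep (isPreconnected_of_forall_pair fun a ha b hb => ⟨_, connectedComponentIn_subset _ a,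
      mem_connectedComponentIn ha, h a ha b hb ▸ mem_connectedComponentIn hb,
      isPreconnected_connectedComponentIn⟩)
  rcases connectedComponentIn_eq_or_isBounded hJ.isCompact.isBounded with h | h | h
  · exact absurd h hab
  · exact hdomain a b ha hb (fun hmem => hab (connectedComponentIn_eq hmem)) h
  · exact hdomain b a hb ha (fun hmem => hab (connectedComponentIn_eq hmem).symm) h

theorem subset_ball_of_frontier_subset {W : Set ℂ} (hW : Bornology.IsBounded W) {c : ℂ} {ρ : ℝ}
    (hfr : frontier W ⊆ ball c ρ) : W ⊆ ball c ρ := by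
  rcases W.eq_empty_or_nonempty with rfl | -
  · exact empty_subset _
  obtain ⟨r, hr, hfr'⟩ := exists_lt_subset_ball isClosed_frontier hfr
  intro z hz
  rw [mem_ball_iff_norm]
  refine (Complex.norm_le_of_forall_mem_frontier_norm_le hW (f := (· - c)) ?_ ?_
    (subset_closure hz)).trans_lt hr
  · exact (differentiable_id.sub_const c).diffContOnCl
  · exact fun y hy => (mem_ball_iff_norm.1 (hfr' hy)).le

theorem IsArc.exists_isJordanDomain {A : Set ℂ} {a b x : ℂ} (hA : IsArc A a b) (hx : x ∉ A)
    (hxa : segment ℝ x a ∩ A ⊆ {a}) (hxb : segment ℝ x b ∩ A ⊆ {b})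
    (hab : segment ℝ x a ∩ segment ℝ x b ⊆ {x}) (hb : b ∈ A) :
    ∃ W, IsJordanDomain W ∧ frontier W = A ∪ (segment ℝ x a ∪ segment ℝ x b) := by
  have hne : a ≠ x := fun h => hx (h ▸ hA.left_mem)
  have hneb : b ≠ x := fun h => hx (h ▸ hb)
  have hcurve : A ∪ (segment ℝ x a ∪ segment ℝ x b) = A ∪ segment ℝ b x ∪ segment ℝ x a := by
    rw [segment_symm ℝ b x, union_assoc, union_comm (segment ℝ x a)]
  have hAb : IsArc (A ∪ segment ℝ b x) a x := by
    refine hA.union (isArc_segment hneb) ?_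
    rwa [segment_symm, inter_comm]
  have hclosed : IsJordanCurve (A ∪ segment ℝ b x ∪ segment ℝ x a) := by
    refine hAb.isJordanCurve_union (isArc_segment hne.symm) ?_
    rintro z ⟨hz | hz, hza⟩
    · exact Or.inl (hxa ⟨hza, hz⟩)
    · exact Or.inr (hab ⟨hza, segment_symm ℝ b x ▸ hz⟩)
  rw [hcurve]
  refine hclosed.exists_isJordanDomain (not_isPreconnected_compl_union_segment
    hAb.isCompact.isClosed hAb.isPreconnected (Or.inr (right_mem_segment ℝ b x))
    (Or.inl hA.left_mem) ?_)
  have hmid := midpoint_mem_segment (𝕜 := ℝ) x a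
  rintro (hz | hz)
  · exact hne ((midpoint_eq_right_iff ℝ).1 (hxa ⟨hmid, hz⟩)).symm
  · exact hne ((midpoint_eq_left_iff ℝ).1 (hab ⟨hmid, segment_symm ℝ b x ▸ hz⟩)).symm

theorem IsJordanCurve.disjoint_of_arc_subset_frontier {J A W : Set ℂ} (hJ : IsJordanCurve J)
    {a b : ℂ} (hA : IsArc A a b) (hAJ : A ⊆ J) (hW : IsOpen W) (hAW : A ⊆ frontier W)
    (hrest : Disjoint (J \ A) (frontier W)) (hJW : ¬ J ⊆ closure W) : Disjoint W J := by
  refine Set.disjoint_left.2 fun z hzW hzJ => hJW fun y hy => ?_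
  have hzA : z ∉ A := fun hzA => (hW.frontier_eq ▸ hAW hzA : z ∈ closure W \ W).2 hzW
  by_cases hyA : y ∈ A
  · exact (hAW hyA).1
  · exact subset_closure (subset_of_isPreconnected_of_disjoint_frontier
      (hJ.isPreconnected_diff_arc hA hAJ) ⟨z, ⟨hzJ, hzA⟩, hzW⟩ hrest ⟨hy, hyA⟩)

theorem exists_isJordanDomain_subset_connectedComponentIn {Ω A : Set ℂ} (hΩ : IsOpen Ω)
    (hJ : IsJordanCurve (frontier Ω)) {c a b x : ℂ} {ρ : ℝ} (hA : IsArc A a b) (hb : b ∈ A)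
    (hAJ : A ⊆ frontier Ω) (hAball : A ⊆ ball c ρ) (hJball : ¬ frontier Ω ⊆ ball c ρ)
    (hx : x ∈ Ω ∩ ball c ρ) (hxa : segment ℝ x a \ {a} ⊆ Ω) (hxb : segment ℝ x b \ {b} ⊆ Ω)
    (hab : segment ℝ x a ∩ segment ℝ x b ⊆ {x}) :
    ∃ W, IsJordanDomain W ∧ A ⊆ frontier W ∧
      W ⊆ connectedComponentIn (ball c ρ \ frontier Ω) x := by
  have hdisj : Disjoint Ω (frontier Ω) := (hΩ.frontier_eq ▸ disjoint_sdiff_right)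
  have hseg : ∀ {e}, segment ℝ x e \ {e} ⊆ Ω → segment ℝ x e ∩ frontier Ω ⊆ {e} :=
    fun h z hz => by_contra fun hze => Set.disjoint_left.1 hdisj (h ⟨hz.1, hze⟩) hz.2
  have hxJ : x ∉ frontier Ω := Set.disjoint_left.1 hdisj hx.1
  obtain ⟨W, hW, hfr⟩ := hA.exists_isJordanDomain (fun h => hxJ (hAJ h))
    ((inter_subset_inter_right _ hAJ).trans (hseg hxa))
    ((inter_subset_inter_right _ hAJ).trans (hseg hxb)) hab hb
  have hfrball : frontier W ⊆ ball c ρ := hfr ▸ union_subset hAball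
    (union_subset ((convex_ball c ρ).segment_subset hx.2 (hAball hA.left_mem))
      ((convex_ball c ρ).segment_subset hx.2 (hAball hb)))
  have hWball : W ⊆ ball c ρ := subset_ball_of_frontier_subset hW.2.2.1 hfrball
  have hrest : Disjoint (frontier Ω \ A) (frontier W) := by
    rw [hfr, Set.disjoint_left]
    rintro z ⟨hzJ, hzA⟩ (hz | hz | hz)
    · exact hzA hz
    · exact hzA (hseg hxa ⟨hz, hzJ⟩ ▸ hA.left_mem)
    · exact hzA (hseg hxb ⟨hz, hzJ⟩ ▸ hb)
  have hWJ : Disjoint W (frontier Ω) :=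
    hJ.disjoint_of_arc_subset_frontier hA hAJ hW.1 (hfr ▸ subset_union_left) hrest
      fun h => hJball (h.trans (closure_eq_self_union_frontier W ▸ union_subset hWball hfrball))
  have hopen : IsOpen (ball c ρ \ frontier Ω) := isOpen_ball.sdiff isClosed_frontier
  have hxW : x ∈ frontier W := hfr ▸ Or.inr (Or.inl (left_mem_segment ℝ x a))
  obtain ⟨v, hv, hvW⟩ := mem_closure_iff.1 hxW.1 _ hopen.connectedComponentIn
    (mem_connectedComponentIn ⟨hx.2, hxJ⟩)
  refine ⟨W, hW, hfr ▸ subset_union_left, ?_⟩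
  rw [connectedComponentIn_eq hv]
  exact hW.2.1.isPreconnected.subset_connectedComponentIn hvW (subset_sdiff.2 ⟨hWball, hWJ⟩)

end CrossCut

section BoundaryPatches

/-- `F` is holomorphic on `V`, bounded there by `M`, and continuous up to the part of the boundary
of `V` in `B`. -/
structure IsBoundedHolomorphic (B V : Set ℂ) (M : ℝ) (F : ℂ → ℂ) : Prop where
  differentiableOn : DifferentiableOn ℂ F V
  norm_le : ∀ z ∈ V, ‖F z‖ ≤ M
  continuousOn : ContinuousOn F (closure V ∩ B)

/-- `f` extends continuously from the part of the boundary of `V` in `B` to a holomorphic function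
on `V` bounded by `M`. -/
def HasBoundedExtension (B V : Set ℂ) (M : ℝ) (f : ℂ → ℂ) : Prop :=
  ∃ F : ℂ → ℂ, IsBoundedHolomorphic B V M F ∧ EqOn F f (frontier V ∩ B)

/-- One side `V` of the simple subarc `γ([p, q])` within the open set `B`. Extendability to `V`
implies one-sided extendability because `V` contains a Jordan domain attached to a subarc. -/
structure IsBoundaryPatch (I : Set ℝ) (γ : ℝ → ℂ) (p q : ℝ) (B V : Set ℂ) : Prop where
  Icc_subset : Icc p q ⊆ I
  injOn : InjOn γ (Icc p q)
  isOpen_window : IsOpen B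
  isOpen : IsOpen V
  isConnected : IsConnected V
  isBounded : Bornology.IsBounded V
  subset : V ⊆ B
  frontier_inter_subset : frontier V ∩ B ⊆ γ '' Icc p q
  disjoint : Disjoint V (γ '' Icc p q)
  exists_isJordanDomain : ∃ W s t, IsJordanDomain W ∧ W ⊆ V ∧ s < t ∧ Icc s t ⊆ Icc p q ∧
    γ '' Icc s t ⊆ frontier W ∩ B

variable {I : Set ℝ} {γ : ℝ → ℂ} {p q m : ℝ} {B V Ω : Set ℂ} {f : ℂ → ℂ}

theorem IsBoundaryPatch.mem_frontier_of_subset (hP : IsBoundaryPatch I γ p q B V) {W : Set ℂ}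
    (hWV : W ⊆ V) {t : ℝ} (ht : t ∈ Icc p q) (hW : γ t ∈ frontier W) : γ t ∈ frontier V :=
  hP.isOpen.frontier_eq ▸ ⟨closure_mono hWV hW.1, fun h =>
    Set.disjoint_left.1 hP.disjoint h (mem_image_of_mem γ ht)⟩

theorem IsBoundaryPatch.frontier_inter_nonempty (hP : IsBoundaryPatch I γ p q B V) :
    (frontier V ∩ B).Nonempty := by
  obtain ⟨W, s, t, -, hWV, hst, hsub, hW⟩ := hP.exists_isJordanDomain
  have hs := left_mem_Icc.2 hst.le
  have hsW := hW (mem_image_of_mem γ hs)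
  exact ⟨γ s, hP.mem_frontier_of_subset hWV (hsub hs) hsW.1, hsW.2⟩

theorem IsBoundaryPatch.somewhereOneSidedHolExt (hP : IsBoundaryPatch I γ p q B V) {M : ℝ}
    (hf : HasBoundedExtension B V M f) : SomewhereOneSidedHolExt I γ f := by
  obtain ⟨W, s, t, hW, hWV, hst, hsub, hWfr⟩ := hP.exists_isJordanDomain
  obtain ⟨F, hF, hFf⟩ := hf
  have hmem : ∀ u ∈ Ioo s t, γ u ∈ frontier V ∩ B := fun u hu =>
    have huW := hWfr (mem_image_of_mem γ (Ioo_subset_Icc_self hu))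
    ⟨hP.mem_frontier_of_subset hWV (hsub (Ioo_subset_Icc_self hu)) huW.1, huW.2⟩
  refine ⟨W, hW, s, hP.Icc_subset (hsub (left_mem_Icc.2 hst.le)), t,
    hP.Icc_subset (hsub (right_mem_Icc.2 hst.le)), hst, hWfr.trans inter_subset_left, F,
    hF.continuousOn.mono (union_subset ?_ ?_),
    hF.differentiableOn.mono hWV, fun u hu => hFf (hmem u hu)⟩
  · exact subset_inter (hWV.trans subset_closure) (hWV.trans hP.subset)
  · rintro _ ⟨u, hu, rfl⟩
    exact ⟨(hmem u hu).1.1, (hmem u hu).2⟩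

theorem isBoundaryPatch_connectedComponentIn (hI : Icc p q ⊆ I) (hγ : ContinuousOn γ (Icc p q))
    (hinj : InjOn γ (Icc p q)) {c x : ℂ} {ρ : ℝ} (hx : x ∈ ball c ρ \ γ '' Icc p q)
    (hdomain : ∃ W s t, IsJordanDomain W ∧ W ⊆ connectedComponentIn (ball c ρ \ γ '' Icc p q) x ∧
      s < t ∧ Icc s t ⊆ Icc p q ∧ γ '' Icc s t ⊆ frontier W ∩ ball c ρ) :
    IsBoundaryPatch I γ p q (ball c ρ) (connectedComponentIn (ball c ρ \ γ '' Icc p q) x) := by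
  have hsub := connectedComponentIn_subset (ball c ρ \ γ '' Icc p q) x
  have hopen : IsOpen (ball c ρ \ γ '' Icc p q) :=
    isOpen_ball.sdiff (isCompact_Icc.image_of_continuousOn hγ).isClosed
  refine ⟨hI, hinj, isOpen_ball, hopen.connectedComponentIn,
    isConnected_connectedComponentIn_iff.2 hx, isBounded_ball.subset (hsub.trans sdiff_subset),
    hsub.trans sdiff_subset, fun z hz => ?_, disjoint_sdiff_left.mono_left hsub, hdomain⟩
  by_contra hzγ
  exact frontier_connectedComponentIn_subset_compl hopen x hz.1 ⟨hz.2, hzγ⟩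

theorem IsJordanCurve.image_Ioo_union_compl_mem_nhds {J : Set ℂ} (hJ : IsJordanCurve J)
    (hγ : ContinuousOn γ (Icc p q)) (hinj : InjOn γ (Icc p q)) (hsub : γ '' Icc p q ⊆ J)
    (hm : m ∈ Ioo p q) : γ '' Ioo p q ∪ Jᶜ ∈ 𝓝 (γ m) := by
  have hclosed := hJ.isClosed_diff_image_Ioo (hm.1.trans hm.2) hγ hinj hsub
  refine mem_of_superset (hclosed.isOpen_compl.mem_nhds fun h => h.2 (mem_image_of_mem γ hm)) ?_
  intro z hz
  by_cases hzJ : z ∈ J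
  · exact Or.inl (by_contra fun h => hz ⟨hzJ, h⟩)
  · exact Or.inr hzJ

theorem accPt_image_of_injOn {X Y : Type*} [TopologicalSpace X] [TopologicalSpace Y] {φ : X → Y}
    {x : X} [(𝓝[≠] x).NeBot] {s : Set X} (hs : s ∈ 𝓝 x) (hφ : ContinuousAt φ x)
    (hinj : InjOn φ s) : AccPt (φ x) (𝓟 (φ '' s)) := by
  refine accPt_iff_nhds.2 fun U hU => ?_
  obtain ⟨y, ⟨hyU, hys⟩, hyx⟩ := (((eventually_nhdsWithin_of_eventually_nhds (hφ hU)).and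
    (eventually_nhdsWithin_of_eventually_nhds hs)).and (self_mem_nhdsWithin : {x}ᶜ ∈ 𝓝[≠] x)).exists
  exact ⟨φ y, ⟨hyU, mem_image_of_mem φ hys⟩, fun h => hyx (hinj hys (mem_of_mem_nhds hs) h)⟩

theorem IsJordanDomain.exists_attached_isJordanDomain (hΩ : IsJordanDomain Ω)
    (hγ : ContinuousOn γ (Icc p q)) (hinj : InjOn γ (Icc p q)) (hsub : γ '' Icc p q ⊆ frontier Ω)
    (hm : m ∈ Ioo p q) {c : ℂ} {ρ : ℝ} (hmB : γ m ∈ ball c ρ)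
    (hJB : ball c ρ ∩ frontier Ω ⊆ γ '' Ioo p q) :
    ∃ x ∈ Ω ∩ ball c ρ, ∃ W s t, IsJordanDomain W ∧
      W ⊆ connectedComponentIn (ball c ρ \ frontier Ω) x ∧ s < t ∧ Icc s t ⊆ Icc p q ∧
      γ '' Icc s t ⊆ frontier W ∩ ball c ρ := by
  have hpq := Icc_mem_nhds hm.1 hm.2
  have hcont : ContinuousAt γ m := hγ.continuousAt hpq
  obtain ⟨p', q', -, hp'q', hsub'⟩ := exists_Icc_mem_subset_of_mem_nhds
    (inter_mem (hcont (isOpen_ball.mem_nhds hmB)) hpq)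
  have hpq' : Icc p' q' ⊆ Icc p q := fun u hu => (hsub' hu).2
  have hnear := IsJordanCurve.image_Ioo_union_compl_mem_nhds hΩ.2.2.2 (hγ.mono hpq')
    (hinj.mono hpq') ((image_mono hpq').trans hsub) (Icc_mem_nhds_iff.1 hp'q')
  obtain ⟨r, hr, hrs⟩ := Metric.mem_nhds_iff.1 (inter_mem hnear (isOpen_ball.mem_nhds hmB))
  have hacc : AccPt (γ m) (𝓟 (frontier Ω)) :=
    (accPt_image_of_injOn hpq hcont hinj).mono (principal_mono.2 hsub)
  obtain ⟨x, hx, a, ha, b, hb, hab, hxa, hxb⟩ := exists_visible_pair hΩ.1 hacc hr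
  have hnotMem : ∀ {z}, z ∈ frontier Ω → z ∉ Ω := fun hz => (hΩ.1.frontier_eq ▸ hz).2
  have hinter := segment_inter_segment_subset_singleton (hnotMem ha.1) (hnotMem hb.1) hab hxa hxb
  obtain ⟨s, hs, rfl⟩ := (hrs ha.2).1.resolve_right fun h => h ha.1
  obtain ⟨t, ht, rfl⟩ := (hrs hb.2).1.resolve_right fun h => h hb.1
  wlog hst : s < t generalizing s t
  · have hts : t < s := lt_of_le_of_ne (not_lt.1 hst) fun h => hab (h ▸ rfl)
    exact this t ht hb hxb s hs ha hxa hab.symm (inter_comm _ _ ▸ hinter) hts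
  have hst' : Icc s t ⊆ Icc p' q' := Icc_subset_Icc hs.1.le ht.2.le
  have hstB : γ '' Icc s t ⊆ ball c ρ := image_subset_iff.2 fun u hu => (hsub' (hst' hu)).1
  have hstpq := hst'.trans hpq'
  have hJnot : ¬ frontier Ω ⊆ ball c ρ := fun h => by
    have hp : p ∈ Icc p q := left_mem_Icc.2 (hm.1.trans hm.2).le
    have hpJ := hsub (mem_image_of_mem γ hp)
    obtain ⟨u, hu, hup⟩ := hJB ⟨h hpJ, hpJ⟩
    exact hu.1.ne' (hinj (Ioo_subset_Icc_self hu) hp hup)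
  obtain ⟨W, hW, hWfr, hWV⟩ := exists_isJordanDomain_subset_connectedComponentIn hΩ.1 hΩ.2.2.2
    (isArc_image_Icc hst (hγ.mono hstpq) (hinj.mono hstpq))
    (mem_image_of_mem γ (right_mem_Icc.2 hst.le)) ((image_mono hstpq).trans hsub) hstB hJnot
    ⟨hx.1, (hrs hx.2).2⟩ hxa hxb hinter
  exact ⟨x, ⟨hx.1, (hrs hx.2).2⟩, W, s, t, hW, hWV, hst, hstpq, subset_inter hWfr hstB⟩

theorem exists_ball_denseSeq_subset {z : ℂ} {U : Set ℂ} (hU : U ∈ 𝓝 z) :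
    ∃ (i : ℕ) (ρ : ℚ), z ∈ ball (TopologicalSpace.denseSeq ℂ i) ρ ∧
      ball (TopologicalSpace.denseSeq ℂ i) ρ ⊆ U := by
  obtain ⟨r, hr, hrU⟩ := Metric.mem_nhds_iff.1 hU
  obtain ⟨ρ, hρ0, hρr⟩ := exists_rat_btwn (half_pos hr)
  obtain ⟨i, hi⟩ := (TopologicalSpace.denseRange_denseSeq ℂ).exists_dist_lt z hρ0
  exact ⟨i, ρ, hi, (ball_subset_ball' (by rw [dist_comm]; linarith)).trans hrU⟩

theorem exists_rat_Icc_mem_nhds {U : Set ℝ} (hU : U ∈ 𝓝 m) :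
    ∃ p q : ℚ, m ∈ Ioo (p : ℝ) q ∧ Icc (p : ℝ) q ⊆ U := by
  obtain ⟨a, b, -, hab, habU⟩ := exists_Icc_mem_subset_of_mem_nhds hU
  obtain ⟨ha, hb⟩ := Icc_mem_nhds_iff.1 hab
  obtain ⟨p, hap, hpm⟩ := exists_rat_btwn ha
  obtain ⟨q, hmq, hqb⟩ := exists_rat_btwn hb
  exact ⟨p, q, ⟨hpm, hmq⟩, (Icc_subset_Icc hap.le hqb.le).trans habU⟩

/-- The boundary patches in `γ` cut out by a ball with dense centre and rational radius, a subarc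
with rational endpoints, and a base point in a dense sequence. -/
def rationalPatches (I : Set ℝ) (γ : ℝ → ℂ) : Set (Set ℂ × Set ℂ) :=
  {P | ∃ p q, IsBoundaryPatch I γ p q P.1 P.2} ∩ range fun n : ℕ × ℚ × ℚ × ℚ × ℕ =>
    (ball (TopologicalSpace.denseSeq ℂ n.1) n.2.1,
      connectedComponentIn (ball (TopologicalSpace.denseSeq ℂ n.1) n.2.1 \
        γ '' Icc (n.2.2.1 : ℝ) n.2.2.2.1) (TopologicalSpace.denseSeq ℂ n.2.2.2.2))

theorem countable_rationalPatches : (rationalPatches I γ).Countable :=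
  (countable_range _).mono inter_subset_right

theorem IsJordanDomain.exists_rationalPatch (hΩ : IsJordanDomain Ω) {S : Set ℝ} (hSI : S ⊆ I)
    (hγ : ContinuousOn γ S) (hinj : InjOn γ S) (hsub : γ '' S ⊆ frontier Ω) (hm : S ∈ 𝓝 m)
    {U : Set ℂ} (hU : U ∈ 𝓝 (γ m)) :
    ∃ P ∈ rationalPatches I γ, P.1 ⊆ U ∧ P.2 ⊆ Ω ∧ frontier P.2 ∩ P.1 ⊆ γ '' S := by
  obtain ⟨p, q, hmpq, hpqS⟩ := exists_rat_Icc_mem_nhds hm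
  have hJ : IsJordanCurve (frontier Ω) := hΩ.2.2.2
  have hγpq := hγ.mono hpqS
  have hsubpq := (image_mono hpqS).trans hsub
  obtain ⟨i, ρ, hmB, hB⟩ := exists_ball_denseSeq_subset (inter_mem hU
    (hJ.image_Ioo_union_compl_mem_nhds hγpq (hinj.mono hpqS) hsubpq hmpq))
  set c := TopologicalSpace.denseSeq ℂ i
  have hJB : ball c ρ ∩ frontier Ω ⊆ γ '' Ioo (p : ℝ) q := fun z hz =>
    (hB hz.1).2.resolve_right fun h => h hz.2
  obtain ⟨x, hx, W, s, t, hW, hWx, hrest⟩ := hΩ.exists_attached_isJordanDomain hγpq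
    (hinj.mono hpqS) hsubpq hmpq hmB hJB
  have hdiff : ball c ρ \ frontier Ω = ball c ρ \ γ '' Icc (p : ℝ) q :=
    Subset.antisymm (sdiff_subset_sdiff_right hsubpq) fun z hz =>
      ⟨hz.1, fun h => hz.2 (image_mono Ioo_subset_Icc_self (hJB ⟨hz.1, h⟩))⟩
  have hxJ : x ∉ frontier Ω := fun h => (hΩ.1.frontier_eq ▸ h : x ∈ closure Ω \ Ω).2 hx.1
  have hopen : IsOpen (ball c ρ \ frontier Ω) := isOpen_ball.sdiff isClosed_frontier
  obtain ⟨j, hj⟩ := (TopologicalSpace.denseRange_denseSeq ℂ).exists_mem_open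
    hopen.connectedComponentIn ⟨x, mem_connectedComponentIn ⟨hx.2, hxJ⟩⟩
  have hVΩ : connectedComponentIn (ball c ρ \ frontier Ω) x ⊆ Ω :=
    subset_of_isPreconnected_of_disjoint_frontier isPreconnected_connectedComponentIn
      ⟨x, mem_connectedComponentIn ⟨hx.2, hxJ⟩, hx.1⟩
      (disjoint_sdiff_left.mono_left (connectedComponentIn_subset _ _))
  have hjV := connectedComponentIn_subset _ _ hj
  rw [connectedComponentIn_eq hj, hdiff] at hWx hVΩ
  have hP := isBoundaryPatch_connectedComponentIn (hpqS.trans hSI) hγpq (hinj.mono hpqS)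
    (hdiff ▸ hjV) ⟨W, s, t, hW, hWx, hrest⟩
  exact ⟨_, ⟨⟨p, q, hP⟩, (i, ρ, p, q, j), rfl⟩, fun z hz => (hB hz).1, hVΩ,
    hP.frontier_inter_subset.trans (image_mono hpqS)⟩

theorem exists_rationalPatch_of_somewhereOneSidedHolExt (hI : I.OrdConnected)
    (hγ : ContinuousOn γ I) (hloc : LocallyInjOn γ I) (hf : SomewhereOneSidedHolExt I γ f) :
    ∃ P ∈ rationalPatches I γ, ∃ M : ℕ, HasBoundedExtension P.1 P.2 M f := by
  obtain ⟨Ω, hΩ, t₁, ht₁, t₂, ht₂, ht, hsub, F, hFc, hFd, hFf⟩ := hf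
  obtain ⟨m, hm⟩ := exists_between ht
  have hIcc : Icc t₁ t₂ ⊆ I := hI.out ht₁ ht₂
  obtain ⟨ε, hε, hinj⟩ := hloc m (hIcc (Ioo_subset_Icc_self hm))
  have hmF : γ m ∈ Ω ∪ γ '' Ioo t₁ t₂ := Or.inr (mem_image_of_mem γ hm)
  obtain ⟨M, hM⟩ := exists_nat_gt ‖F (γ m)‖
  have hbdd := eventually_nhdsWithin_iff.1 ((hFc _ hmF).norm.eventually (gt_mem_nhds hM))
  obtain ⟨P, hP, hPU, hPΩ, hPγ⟩ := hΩ.exists_rationalPatch (S := Ioo t₁ t₂ ∩ Ioo (m - ε) (m + ε))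
    (inter_subset_left.trans (Ioo_subset_Icc_self.trans hIcc))
    (hγ.mono (inter_subset_left.trans (Ioo_subset_Icc_self.trans hIcc)))
    (hinj.mono (inter_subset_inter_left _ (Ioo_subset_Icc_self.trans hIcc)))
    ((image_mono (inter_subset_left.trans Ioo_subset_Icc_self)).trans hsub)
    (inter_mem (Ioo_mem_nhds hm.1 hm.2) (Ioo_mem_nhds (by linarith) (by linarith))) hbdd
  obtain ⟨p, q, hpatch⟩ := hP.1
  have hPγ' := hPγ.trans (image_mono inter_subset_left)
  refine ⟨P, hP, M, F, ⟨hFd.mono hPΩ,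
    fun z hz => (hPU (hpatch.subset hz) (Or.inl (hPΩ hz))).le, hFc.mono ?_⟩, ?_⟩
  · rintro z ⟨hz, hzB⟩
    by_cases hzV : z ∈ P.2
    · exact Or.inl (hPΩ hzV)
    · exact Or.inr (hPγ' ⟨hpatch.isOpen.frontier_eq ▸ ⟨hz, hzV⟩, hzB⟩)
  · intro z hz
    obtain ⟨u, hu, rfl⟩ := hPγ' hz
    exact hFf u hu

end BoundaryPatches

section TwoConstants

theorem norm_le_of_eventually_norm_le_frontier {U : Set ℂ} (hU : IsOpen U)
    (hb : Bornology.IsBounded U) {g : ℂ → ℂ} (hg : DifferentiableOn ℂ g U) {C : ℝ}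
    (hC : ∀ ζ ∈ frontier U, ∀ᶠ z in 𝓝[U] ζ, ‖g z‖ ≤ C) {z : ℂ} (hz : z ∈ U) : ‖g z‖ ≤ C := by
  by_contra! hlt
  let U' := U ∩ {w | C < ‖g w‖}
  have hU' : IsOpen U' := hg.continuousOn.norm.isOpen_inter_preimage hU isOpen_Ioi
  have hcl : closure U' ⊆ U := fun ζ hζ => by
    by_contra hζU
    have hζ' : ζ ∈ frontier U := hU.frontier_eq ▸ ⟨closure_mono inter_subset_left hζ, hζU⟩
    obtain ⟨N, hN, hNC⟩ := mem_nhdsWithin_iff_exists_mem_nhds_inter.1 (hC ζ hζ')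
    obtain ⟨w, hwN, hwU, hwC : C < ‖g w‖⟩ := mem_closure_iff_nhds.1 hζ N hN
    exact (hNC ⟨hwN, hwU⟩).not_gt hwC
  refine (Complex.norm_le_of_forall_mem_frontier_norm_le (hb.subset inter_subset_left)
    ⟨hg.mono inter_subset_left, hg.continuousOn.mono hcl⟩ (fun ζ hζ => ?_)
    (subset_closure (⟨hz, hlt⟩ : z ∈ U'))).not_gt hlt
  rw [hU'.frontier_eq] at hζ
  exact not_lt.1 fun h => hζ.2 ⟨hcl hζ.1, h⟩

theorem norm_pow_mul_norm_le {U : Set ℂ} (hU : IsOpen U) (hb : Bornology.IsBounded U)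
    {f F : ℂ → ℂ} (hf : DifferentiableOn ℂ f U) (hF : DifferentiableOn ℂ F U) {M m κ ε : ℝ}
    (hM : ∀ z ∈ U, ‖F z‖ ≤ M) (hm : ∀ z ∈ U, ‖f z‖ ≤ m)
    (hbd : ∀ ζ ∈ frontier U, (∀ᶠ z in 𝓝[U] ζ, ‖f z‖ ≤ κ) ∨ ∀ᶠ z in 𝓝[U] ζ, ‖F z‖ ≤ ε)
    (n : ℕ) {z : ℂ} (hz : z ∈ U) : ‖f z‖ ^ n * ‖F z‖ ≤ max (κ ^ n * M) (m ^ n * ε) := by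
  rw [← norm_pow, ← norm_mul]
  refine norm_le_of_eventually_norm_le_frontier hU hb ((hf.pow n).mul hF) (fun ζ hζ => ?_) hz
  rcases hbd ζ hζ with h | h
  · filter_upwards [h, self_mem_nhdsWithin] with w hw hwU
    rw [Pi.mul_apply, norm_mul, Pi.pow_apply, norm_pow]
    refine le_max_of_le_left ?_
    have := (norm_nonneg _).trans hw
    gcongr
    exact hM w hwU
  · filter_upwards [h, self_mem_nhdsWithin] with w hw hwU
    rw [Pi.mul_apply, norm_mul, Pi.pow_apply, norm_pow]
    refine le_max_of_le_right ?_
    have := (norm_nonneg _).trans (hm w hwU)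
    gcongr
    exact hm w hwU

variable {ι : Type*} {F : ι → ℂ → ℂ} {l : Filter ι} {M : ℝ}

theorem tendstoUniformlyOn_zero_of_barrier {U N : Set ℂ} (hU : IsOpen U)
    (hb : Bornology.IsBounded U) {f : ℂ → ℂ} (hf : DifferentiableOn ℂ f U) {m κ κ' : ℝ}
    (hm : ∀ z ∈ U, ‖f z‖ ≤ m) (hκ : 0 ≤ κ) (hκκ' : κ < κ') (hN : ∀ z ∈ U ∩ N, κ' ≤ ‖f z‖)
    (hF : ∀ i, DifferentiableOn ℂ (F i) U) (hM : ∀ i, ∀ z ∈ U, ‖F i z‖ ≤ M)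
    (hbd : ∀ ε > 0, ∀ᶠ i in l, ∀ ζ ∈ frontier U,
      (∀ᶠ z in 𝓝[U] ζ, ‖f z‖ ≤ κ) ∨ ∀ᶠ z in 𝓝[U] ζ, ‖F i z‖ ≤ ε) :
    TendstoUniformlyOn F 0 l (U ∩ N) := by
  have hκ'0 : 0 < κ' := hκ.trans_lt hκκ'
  refine Metric.tendstoUniformlyOn_iff.2 fun η hη => ?_
  have hlim : Tendsto (fun n : ℕ => (κ / κ') ^ n * M) atTop (𝓝 0) := by
    simpa using (tendsto_pow_atTop_nhds_zero_of_lt_one (div_nonneg hκ hκ'0.le)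
      ((div_lt_one hκ'0).2 hκκ')).mul_const M
  obtain ⟨n, hn⟩ := (hlim.eventually (gt_mem_nhds hη)).exists
  rw [div_pow, div_mul_eq_mul_div, div_lt_iff₀ (by positivity)] at hn
  obtain ⟨ε, hε0, hε⟩ := exists_pos_mul_lt (mul_pos hη (pow_pos hκ'0 n)) (m ^ n)
  filter_upwards [hbd ε hε0] with i hi z hz
  rw [Pi.zero_apply, dist_zero_left]
  have hmax := (norm_pow_mul_norm_le hU hb hf (hF i) (hM i) hm hi n hz.1).trans_lt (max_lt hn hε)
  have hpow : κ' ^ n * ‖F i z‖ ≤ ‖f z‖ ^ n * ‖F i z‖ := by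
    gcongr
    exact hN z hz
  rw [mul_comm η] at hmax
  exact lt_of_mul_lt_mul_left (hpow.trans_lt hmax) (by positivity)

end TwoConstants

section Vanishing

variable {ι : Type*} {F : ι → ℂ → ℂ} {l : Filter ι} {V : Set ℂ} {M : ℝ}

/-- The family `F` converges to zero along `l`, uniformly on the part of `V` near `z`. -/
def VanishesNear (F : ι → ℂ → ℂ) (l : Filter ι) (V : Set ℂ) (z : ℂ) : Prop :=
  ∃ N ∈ 𝓝 z, TendstoUniformlyOn F 0 l (V ∩ N)

theorem isOpen_setOf_vanishesNear : IsOpen {z | VanishesNear F l V z} := by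
  rw [isOpen_iff_mem_nhds]
  rintro z ⟨N, hN, h⟩
  filter_upwards [eventually_mem_nhds_iff.2 hN] with w hw
  exact ⟨N, hw, h⟩

theorem VanishesNear.closure_inter {B : Set ℂ} {z : ℂ} (hVB : V ⊆ B)
    (hF : ∀ i, ContinuousOn (F i) (closure V ∩ B)) (h : VanishesNear F l V z) :
    VanishesNear F l (closure V ∩ B) z := by
  obtain ⟨N, hN, hFN⟩ := h
  refine ⟨interior N, interior_mem_nhds.2 hN, Metric.tendstoUniformlyOn_iff.2 fun ε hε => ?_⟩
  filter_upwards [Metric.tendstoUniformlyOn_iff.1 hFN _ (half_pos hε)] with i hi w hw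
  have hcont : ContinuousWithinAt (F i) (interior N ∩ V) w :=
    (hF i w hw.1).mono fun v hv => ⟨subset_closure hv.2, hVB hv.2⟩
  have hmem : F i w ∈ closure (F i '' (interior N ∩ V)) :=
    hcont.mem_closure_image (isOpen_interior.inter_closure ⟨hw.2, hw.1.1⟩)
  have hle : F i w ∈ closedBall 0 (ε / 2) := by
    refine closure_minimal (image_subset_iff.2 fun v hv => ?_) isClosed_closedBall hmem
    exact mem_closedBall'.2 (hi v ⟨hv.2, interior_subset hv.1⟩).le
  exact (mem_closedBall'.1 hle).trans_lt (half_lt_self hε)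

-- Three circles: the barrier on the annulus is `r / (z - c)`.
theorem tendstoUniformlyOn_annulus {c : ℂ} {r r₀ ρ R : ℝ} (hr : 0 < r) (hrr₀ : r < r₀)
    (hρ : 0 < ρ) (hρR : ρ < R) (hF : ∀ i, DifferentiableOn ℂ (F i) (ball c R \ closedBall c r))
    (hM : ∀ i, ∀ z ∈ ball c R \ closedBall c r, ‖F i z‖ ≤ M)
    (h : TendstoUniformlyOn F 0 l (ball c r₀)) :
    TendstoUniformlyOn F 0 l ((ball c R \ closedBall c r) ∩ ball c ρ) := by
  obtain ⟨ρ', hρρ', hρ'R⟩ := exists_between hρR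
  have hρ' : 0 < ρ' := hρ.trans hρρ'
  have hnorm : ∀ z : ℂ, ‖(r : ℂ) / (z - c)‖ = r / dist z c := fun z => by
    rw [norm_div, Complex.norm_of_nonneg hr.le, dist_eq_norm]
  have hfar : ∀ z ∈ ball c R \ closedBall c r, r < dist z c := fun z hz => not_le.1 hz.2
  have hU : IsOpen (ball c R \ closedBall c r) := isOpen_ball.sdiff isClosed_closedBall
  refine tendstoUniformlyOn_zero_of_barrier hU (isBounded_ball.subset sdiff_subset)
    (f := fun z => r / (z - c)) (m := 1) (κ := r / ρ') (κ' := r / ρ) (fun z hz => ?_) ?_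
    (by positivity) (div_lt_div_of_pos_left hr hρ hρρ') ?_ hF hM fun ε hε => ?_
  · refine DifferentiableAt.differentiableWithinAt (.div (by fun_prop) (by fun_prop) ?_)
    exact sub_ne_zero.2 (dist_pos.1 (hr.trans (hfar z hz)))
  · exact fun z hz => hnorm z ▸ (div_le_one (hr.trans (hfar z hz))).2 (hfar z hz).le
  · exact fun z hz => hnorm z ▸ div_le_div_of_nonneg_left hr.le (hr.trans (hfar z hz.1)) hz.2.le
  filter_upwards [Metric.tendstoUniformlyOn_iff.1 h ε hε] with i hi ζ hζ
  rcases lt_or_ge (dist ζ c) r₀ with hζr | hζr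
  · right
    filter_upwards [mem_nhdsWithin_of_mem_nhds (isOpen_ball.mem_nhds hζr)] with z hz
    exact mem_closedBall_zero_iff.1 (mem_closedBall'.2 (hi z hz).le)
  · have hζR : ρ' < dist ζ c := hρ'R.trans_le <| not_lt.1 fun hζR =>
      (hU.frontier_eq ▸ hζ).2 ⟨hζR, not_le.2 (hrr₀.trans_le hζr)⟩
    left
    filter_upwards [mem_nhdsWithin_of_mem_nhds
      ((continuous_id.dist continuous_const).continuousAt.eventually (lt_mem_nhds hζR))] with z hz
    exact hnorm z ▸ div_le_div_of_nonneg_left hr.le hρ' hz.le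

theorem VanishesNear.tendstoUniformlyOn_ball {c : ℂ} {ρ R : ℝ} (hρ : 0 < ρ) (hρR : ρ < R)
    (hR : ball c R ⊆ V) (hF : ∀ i, DifferentiableOn ℂ (F i) V) (hM : ∀ i, ∀ z ∈ V, ‖F i z‖ ≤ M)
    (h : VanishesNear F l V c) : TendstoUniformlyOn F 0 l (ball c ρ) := by
  obtain ⟨N, hN, hFN⟩ := h
  obtain ⟨r₀, hr₀, hr₀N⟩ := Metric.mem_nhds_iff.1 (inter_mem hN (ball_mem_nhds c hρ))
  obtain ⟨r, hr, hrr₀⟩ := exists_between hr₀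
  have hFr₀ : TendstoUniformlyOn F 0 l (ball c r₀) :=
    hFN.mono fun z hz => ⟨hR (ball_subset_ball hρR.le (hr₀N hz).2), (hr₀N hz).1⟩
  have hannulus : ball c R \ closedBall c r ⊆ V := sdiff_subset.trans hR
  have hFU := tendstoUniformlyOn_annulus hr hrr₀ hρ hρR (fun i => (hF i).mono hannulus)
    (fun i z hz => hM i z (hannulus hz)) hFr₀
  refine Metric.tendstoUniformlyOn_iff.2 fun ε hε => ?_
  filter_upwards [Metric.tendstoUniformlyOn_iff.1 hFr₀ ε hε,
    Metric.tendstoUniformlyOn_iff.1 hFU ε hε] with i hi hi' z hz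
  rcases le_or_gt (dist z c) r with hzr | hzr
  · exact hi z (hzr.trans_lt hrr₀)
  · exact hi' z ⟨⟨hz.trans hρR, not_le.2 hzr⟩, hz⟩

theorem VanishesNear.of_mem_closure (hV : IsOpen V) (hF : ∀ i, DifferentiableOn ℂ (F i) V)
    (hM : ∀ i, ∀ z ∈ V, ‖F i z‖ ≤ M) {α : ℂ} (hα : α ∈ V)
    (hcl : α ∈ closure {z | VanishesNear F l V z}) : VanishesNear F l V α := by
  obtain ⟨R, hR, hRV⟩ := Metric.isOpen_iff.1 hV α hα
  obtain ⟨c, hc, hαc⟩ := Metric.mem_closure_iff.1 hcl (R / 3) (by positivity)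
  have hball : ball c (2 * R / 3) ⊆ V := (ball_subset_ball' (by linarith [dist_comm c α])).trans hRV
  refine ⟨ball c (R / 3), isOpen_ball.mem_nhds hαc, TendstoUniformlyOn.mono
    (hc.tendstoUniformlyOn_ball (by positivity) (by linarith) hball hF hM) inter_subset_right⟩

theorem vanishesNear_of_isPreconnected (hV : IsOpen V) (hVc : IsPreconnected V)
    (hF : ∀ i, DifferentiableOn ℂ (F i) V) (hM : ∀ i, ∀ z ∈ V, ‖F i z‖ ≤ M) {y : ℂ}
    (hy : y ∈ closure V) (h : VanishesNear F l V y) {z : ℂ} (hz : z ∈ V) :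
    VanishesNear F l V z := by
  obtain ⟨w, hw, hwV⟩ := mem_closure_iff.1 hy _ isOpen_setOf_vanishesNear h
  exact hVc.subset_of_closure_inter_subset isOpen_setOf_vanishesNear ⟨w, hwV, hw⟩
    (fun α hα => .of_mem_closure hV hF hM hα.2 hα.1) hz

end Vanishing

section ExteriorBarrier

theorem differentiableAt_of_sq_eq {σ w : ℂ → ℂ} {a : ℂ} (hσ : ContinuousAt σ a) (hne : σ a ≠ 0)
    (hw : DifferentiableAt ℂ w a) (hσw : ∀ᶠ z in 𝓝 a, σ z ^ 2 = w z) :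
    DifferentiableAt ℂ σ a := by
  have hlim : Tendsto (fun z => σ z + σ a) (𝓝[≠] a) (𝓝 (σ a + σ a)) :=
    (hσ.tendsto.mono_left nhdsWithin_le_nhds).add_const _
  have hne2 : σ a + σ a ≠ 0 := by simpa [← two_mul] using hne
  refine HasDerivAt.differentiableAt (f' := deriv w a / (σ a + σ a)) ?_
  refine hasDerivAt_iff_tendsto_slope.2
    (((hasDerivAt_iff_tendsto_slope.1 hw.hasDerivAt).div hlim hne2).congr' ?_)
  filter_upwards [hlim.eventually_ne hne2, nhdsWithin_le_nhds hσw] with z hz hzw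
  rw [Pi.div_apply, slope_def_field, slope_def_field, ← hzw, ← hσw.self_of_nhds, sq_sub_sq]
  field_simp

theorem re_sub_div_sub_pos {y y' z : ℂ} {s : ℝ} (hy' : dist y' y < s) (hz : 2 * s < dist z y) :
    0 < ((z - y) / (z - y')).re := by
  have hzy' : s < ‖z - y'‖ := by
    rw [← dist_eq_norm]
    linarith [dist_triangle z y' y]
  have hne : z - y' ≠ 0 := norm_pos_iff.1 (dist_nonneg.trans_lt (hy'.trans hzy'))
  have hnear : ‖(z - y) / (z - y') - 1‖ < 1 := by
    rw [div_sub_one hne, sub_sub_sub_cancel_left, norm_div, div_lt_one (norm_pos_iff.2 hne),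
      ← dist_eq_norm]
    exact hy'.trans hzy'
  have hre := (abs_lt.1 ((Complex.abs_re_le_norm _).trans_lt hnear)).1
  rw [Complex.sub_re, Complex.one_re] at hre
  linarith

theorem forall_pos_or_forall_neg_of_isPreconnected {X : Type*} [TopologicalSpace X] {S : Set X}
    (hS : IsPreconnected S) {h : X → ℝ} (hh : ContinuousOn h S) (hne : ∀ x ∈ S, h x ≠ 0) :
    (∀ x ∈ S, 0 < h x) ∨ ∀ x ∈ S, h x < 0 := by
  by_contra! ⟨⟨a, ha, ha0⟩, b, hb, hb0⟩
  obtain ⟨x, hx, hx0⟩ := hS.intermediate_value ha hb hh ⟨ha0, hb0⟩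
  exact hne x hx hx0

theorem exists_sq_eq_sub_div_sub {y y' : ℂ} (p : Path y' y) :
    ∃ σ : ℂ → ℂ, DifferentiableOn ℂ σ (range p)ᶜ ∧
      ∀ z ∉ range p, σ z ^ 2 = (z - y) / (z - y') := by
  have hjoined : JoinedIn (range p)ᶜᶜ y' y := by
    rw [compl_compl]
    exact ⟨p, mem_range_self⟩
  obtain ⟨g, hg, hexp⟩ := hasContinuousLogOn_sub_div_sub_of_joinedIn hjoined
  have hsq : ∀ z ∉ range p, Complex.exp (g z / 2) ^ 2 = (z - y) / (z - y') := fun z hz => by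
    rw [← Complex.exp_nat_mul, Nat.cast_two, mul_div_cancel₀ _ two_ne_zero, hexp z hz]
  have hopen : IsOpen (range p)ᶜ := (isCompact_range p.continuous).isClosed.isOpen_compl
  have hcont : ContinuousOn (fun z => Complex.exp (g z / 2)) (range p)ᶜ := (hg.div_const 2).cexp
  refine ⟨_, fun z hz => ?_, hsq⟩
  have hz' : z - y' ≠ 0 := sub_ne_zero.2 fun h => hz ⟨0, p.source.trans h.symm⟩
  have hw : DifferentiableAt ℂ (fun z => (z - y) / (z - y')) z :=
    .div (by fun_prop) (by fun_prop) hz'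
  refine (differentiableAt_of_sq_eq (hcont.continuousAt (hopen.mem_nhds hz))
    (Complex.exp_ne_zero _) hw ?_).differentiableWithinAt
  filter_upwards [hopen.mem_nhds hz] with w hw using hsq w hw

theorem exists_sq_eq_sub_div_sub_re_pos {y y' : ℂ} (p : Path y' y) {s : ℝ}
    (hp : range p ⊆ ball y s) :
    ∃ σ : ℂ → ℂ, DifferentiableOn ℂ σ (range p)ᶜ ∧
      (∀ z ∉ range p, σ z ^ 2 = (z - y) / (z - y')) ∧
      ∀ z ∈ (closedBall y (2 * s))ᶜ, 0 < (σ z).re := by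
  obtain ⟨σ, hσ, hsq⟩ := exists_sq_eq_sub_div_sub p
  have hs : 0 < s := dist_self y ▸ hp ⟨1, p.target⟩
  have hfar : (closedBall y (2 * s))ᶜ ⊆ (range p)ᶜ :=
    compl_subset_compl.2 (hp.trans (ball_subset_closedBall.trans
      (closedBall_subset_closedBall (by linarith))))
  have hne : ∀ z ∈ (closedBall y (2 * s))ᶜ, (σ z).re ≠ 0 := fun z hz h => by
    have hpos := re_sub_div_sub_pos (hp ⟨0, p.source⟩) (not_le.1 hz)
    rw [← hsq z (hfar hz), sq, Complex.mul_re, h] at hpos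
    nlinarith [sq_nonneg (σ z).im]
  have hcont := Complex.continuous_re.comp_continuousOn (hσ.continuousOn.mono hfar)
  rcases forall_pos_or_forall_neg_of_isPreconnected (isPreconnected_compl_closedBall
    (by simp [Complex.rank_real_complex]) y (by positivity)) hcont hne with h | h
  · exact ⟨σ, hσ, hsq, h⟩
  · exact ⟨-σ, hσ.neg, fun z hz => (neg_sq _).trans (hsq z hz), fun z hz => neg_pos.2 (h z hz)⟩

theorem norm_one_add_inv_le {y y' z σ : ℂ} (hne : y' ≠ y) (hz : z ≠ y')
    (hσ : σ ^ 2 = (z - y) / (z - y')) :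
    ‖(1 + σ)⁻¹‖ ≤ (‖z - y‖ + 2 * ‖z - y'‖) / ‖y' - y‖ := by
  have hy : 0 < ‖y' - y‖ := norm_pos_iff.2 (sub_ne_zero.2 hne)
  have hz' : z - y' ≠ 0 := sub_ne_zero.2 hz
  have hfactor : (1 + σ) * ((σ - 1) * (z - y')) = y' - y := by
    rw [← mul_assoc, ← sub_sub_sub_cancel_left y y' z, ← div_mul_cancel₀ (z - y) hz', ← hσ]
    ring
  have hσz : ‖σ‖ * ‖z - y'‖ ≤ ‖z - y‖ + ‖z - y'‖ := by
    refine le_of_sq_le_sq (a := ‖σ‖ * ‖z - y'‖) ?_ (by positivity)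
    have hnorm : ‖σ‖ ^ 2 * ‖z - y'‖ = ‖z - y‖ := by
      rw [← norm_pow, ← norm_mul, hσ, div_mul_cancel₀ _ hz']
    nlinarith [norm_nonneg (z - y), norm_nonneg (z - y')]
  have hbound : ‖(σ - 1) * (z - y')‖ ≤ ‖z - y‖ + 2 * ‖z - y'‖ := by
    rw [norm_mul]
    nlinarith [norm_sub_le σ 1, norm_nonneg (z - y'), norm_one (α := ℂ)]
  rw [le_div_iff₀ hy, ← hfactor, norm_mul, ← mul_assoc, norm_inv]
  refine (mul_le_of_le_one_left (norm_nonneg _) ?_).trans hbound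
  exact inv_mul_le_one_of_le₀ le_rfl (norm_nonneg _)

theorem exists_barrier_of_path {y y' : ℂ} (hne : y' ≠ y) (p : Path y' y) {s : ℝ}
    (hp : range p ⊆ ball y s) :
    ∃ f : ℂ → ℂ, DifferentiableOn ℂ f (range p)ᶜ ∧
      (∀ z ∉ range p, ‖f z‖ ≤ (‖z - y‖ + 2 * ‖z - y'‖) / ‖y' - y‖) ∧
      (∀ z ∈ (closedBall y (2 * s))ᶜ, ‖f z‖ < 1) ∧
      Tendsto f (𝓝[(range p)ᶜ] y) (𝓝 1) := by
  obtain ⟨σ, hσ, hsq, hre⟩ := exists_sq_eq_sub_div_sub_re_pos p hp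
  have hy' : ∀ z ∉ range p, z ≠ y' := fun z hz h => hz ⟨0, p.source.trans h.symm⟩
  have hlim : Tendsto σ (𝓝[(range p)ᶜ] y) (𝓝 0) := by
    refine tendsto_zero_iff_norm_tendsto_zero.2 ?_
    have hw : ContinuousAt (fun z => (z - y) / (z - y')) y :=
      .div (by fun_prop) (by fun_prop) (sub_ne_zero.2 hne.symm)
    have hw0 : Tendsto (fun z => √‖(z - y) / (z - y')‖) (𝓝 y) (𝓝 0) := by
      simpa using hw.norm.sqrt.tendsto
    refine (hw0.mono_left nhdsWithin_le_nhds).congr' ?_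
    filter_upwards [self_mem_nhdsWithin] with z hz
    rw [← hsq z hz, norm_pow, Real.sqrt_sq (norm_nonneg _)]
  refine ⟨fun z => (1 + σ z)⁻¹, (hσ.const_add 1).inv fun z hz h => ?_,
    fun z hz => norm_one_add_inv_le hne (hy' z hz) (hsq z hz), fun z hz => ?_, ?_⟩
  · have hz' := sub_ne_zero.2 (hy' z hz)
    have := hsq z hz
    rw [← neg_eq_of_add_eq_zero_right h, neg_one_sq, eq_comm, div_eq_one_iff_eq hz'] at this
    exact hne (sub_right_injective this).symm
  · rw [norm_inv]
    refine inv_lt_one_of_one_lt₀ (lt_of_lt_of_le ?_ (Complex.re_le_norm _))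
    rw [Complex.add_re, Complex.one_re]
    exact lt_add_of_pos_right 1 (hre z hz)
  · simpa using (hlim.const_add 1).inv₀ (by simp)

end ExteriorBarrier

section RegularSides

/-- A bounded domain `V` in an open set `B` such that every boundary point `y` of `V` in `B` is the
endpoint of arbitrarily short nontrivial paths in the complement of `V`. These paths carry the
barriers which make the boundary values in `B` determine the bounded holomorphic functions. -/
structure IsRegularSide (B V : Set ℂ) : Prop where
  isOpen_window : IsOpen B
  isOpen : IsOpen V
  isConnected : IsConnected V
  isBounded : Bornology.IsBounded V
  subset : V ⊆ B
  frontier_inter_nonempty : (frontier V ∩ B).Nonempty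
  exists_joinedIn_compl : ∀ y ∈ frontier V ∩ B, ∀ r > 0,
    ∃ y', y' ≠ y ∧ JoinedIn (Vᶜ ∩ ball y r) y' y

theorem IsBoundedHolomorphic.sub {B V : Set ℂ} {M M' : ℝ} {F G : ℂ → ℂ}
    (hF : IsBoundedHolomorphic B V M F) (hG : IsBoundedHolomorphic B V M' G) :
    IsBoundedHolomorphic B V (M + M') (F - G) :=
  ⟨hF.differentiableOn.sub hG.differentiableOn,
    fun z hz => norm_sub_le_of_le (hF.norm_le z hz) (hG.norm_le z hz),
    hF.continuousOn.sub hG.continuousOn⟩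

variable {ι : Type*} {B V : Set ℂ} {M : ℝ} {F : ι → ℂ → ℂ} {l : Filter ι}

theorem IsRegularSide.exists_barrier (hV : IsRegularSide B V) {y : ℂ} (hy : y ∈ frontier V ∩ B)
    {r : ℝ} (hr : 0 < r) :
    ∃ f : ℂ → ℂ, DifferentiableOn ℂ f V ∧ (∃ m, ∀ z ∈ V, ‖f z‖ ≤ m) ∧
      (∃ κ < 1, ∀ ζ ∈ closure V \ ball y r, ∀ᶠ z in 𝓝 ζ, ‖f z‖ ≤ κ) ∧
      Tendsto f (𝓝[V] y) (𝓝 1) := by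
  obtain ⟨y', hne, p, hp⟩ := hV.exists_joinedIn_compl y hy (r / 3) (by positivity)
  have hpV : V ⊆ (range p)ᶜ := fun z hz ⟨t, ht⟩ => (hp t).1 (ht.symm ▸ hz)
  have hpball : range p ⊆ ball y (r / 3) := range_subset_iff.2 fun t => (hp t).2
  obtain ⟨f, hf, hbound, hfar, hlim⟩ := exists_barrier_of_path hne p hpball
  refine ⟨f, hf.mono hpV, ?_, ?_, hlim.mono_left (nhdsWithin_mono y hpV)⟩
  · obtain ⟨m, hm⟩ := hV.isBounded.isCompact_closure.exists_bound_of_continuousOn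
      (f := fun z => (‖z - y‖ + 2 * ‖z - y'‖) / ‖y' - y‖) (by fun_prop)
    exact ⟨m, fun z hz => ((hbound z (hpV hz)).trans (le_abs_self _)).trans
      (hm z (subset_closure hz))⟩
  · have hfar' : ∀ z ∈ closure V \ ball y r, z ∈ (closedBall y (2 * (r / 3)))ᶜ := fun z hz hz' =>
      hz.2 (closedBall_subset_ball (by linarith) hz')
    have hcompl : ∀ z ∈ closure V \ ball y r, z ∈ (range p)ᶜ := fun z hz hzp =>
      hz.2 (ball_subset_ball (by linarith) (hpball hzp))
    have hopen : IsOpen (range p)ᶜ := (isCompact_range p.continuous).isClosed.isOpen_compl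
    obtain ⟨δ, hδ, hfδ⟩ := (hV.isBounded.isCompact_closure.diff isOpen_ball).exists_forall_le'
      (f := fun z => 1 - ‖f z‖) (continuousOn_const.sub (hf.continuousOn.mono hcompl).norm)
      (fun z hz => sub_pos.2 (hfar z (hfar' z hz)))
    refine ⟨1 - δ / 2, by linarith, fun ζ hζ => ?_⟩
    have hlt : ‖f ζ‖ < 1 - δ / 2 := by linarith [hfδ ζ hζ]
    have hcont := hf.continuousOn.continuousAt (hopen.mem_nhds (hcompl ζ hζ))
    exact (hcont.norm.eventually (gt_mem_nhds hlt)).mono fun z hz => hz.le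

theorem IsRegularSide.vanishesNear_of_mem_frontier (hV : IsRegularSide B V)
    (hF : ∀ i, IsBoundedHolomorphic B V M (F i)) (h : TendstoUniformlyOn F 0 l (frontier V ∩ B))
    {y : ℂ} (hy : y ∈ frontier V ∩ B) : VanishesNear F l V y := by
  obtain ⟨r, hr, hrB⟩ := Metric.isOpen_iff.1 hV.isOpen_window y hy.2
  obtain ⟨f, hf, ⟨m, hm⟩, ⟨κ, hκ1, hκ⟩, hlim⟩ := hV.exists_barrier hy hr
  obtain ⟨κ', hκ', hκ'1⟩ := exists_between (max_lt hκ1 one_pos)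
  obtain ⟨N, hN, hfN⟩ := mem_nhdsWithin_iff_exists_mem_nhds_inter.1
    (hlim.norm.eventually (lt_mem_nhds (by rwa [norm_one])))
  refine ⟨N, hN, tendstoUniformlyOn_zero_of_barrier hV.isOpen hV.isBounded hf hm (le_max_right κ 0)
    hκ' (fun z hz => (hfN hz.symm).le) (fun i => (hF i).differentiableOn) (fun i => (hF i).norm_le)
    fun ε hε => ?_⟩
  filter_upwards [Metric.tendstoUniformlyOn_iff.1 h ε hε] with i hi ζ hζ
  by_cases hζr : ζ ∈ ball y r
  · have hζε : ‖F i ζ‖ < ε := by simpa using hi ζ ⟨hζ, hrB hζr⟩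
    have hcont : ContinuousWithinAt (F i) V ζ := ((hF i).continuousOn ζ ⟨hζ.1, hrB hζr⟩).mono
      (subset_inter subset_closure hV.subset)
    exact Or.inr ((hcont.norm.eventually (gt_mem_nhds hζε)).mono fun z hz => hz.le)
  · refine Or.inl (mem_nhdsWithin_of_mem_nhds ((hκ ζ ⟨hζ.1, hζr⟩).mono fun z hz => ?_))
    exact hz.trans (le_max_left κ 0)

theorem IsRegularSide.vanishesNear (hV : IsRegularSide B V)
    (hF : ∀ i, IsBoundedHolomorphic B V M (F i)) (h : TendstoUniformlyOn F 0 l (frontier V ∩ B))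
    {z : ℂ} (hz : z ∈ closure V ∩ B) : VanishesNear F l (closure V ∩ B) z := by
  refine VanishesNear.closure_inter hV.subset (fun i => (hF i).continuousOn) ?_
  by_cases hzV : z ∈ V
  · obtain ⟨y, hy⟩ := hV.frontier_inter_nonempty
    exact vanishesNear_of_isPreconnected hV.isOpen hV.isConnected.isPreconnected
      (fun i => (hF i).differentiableOn) (fun i => (hF i).norm_le) hy.1.1
      (hV.vanishesNear_of_mem_frontier hF h hy) hzV
  · exact hV.vanishesNear_of_mem_frontier hF h ⟨hV.isOpen.frontier_eq ▸ ⟨hz.1, hzV⟩, hz.2⟩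

theorem IsRegularSide.exists_tendstoLocallyUniformlyOn (hV : IsRegularSide B V) [l.NeBot]
    (hF : ∀ i, IsBoundedHolomorphic B V M (F i))
    (hCauchy : UniformCauchySeqOn F l (frontier V ∩ B)) :
    ∃ G : ℂ → ℂ, TendstoLocallyUniformlyOn F G l (closure V ∩ B) := by
  have hdiff : TendstoUniformlyOn (fun i : ι × ι => F i.1 - F i.2) 0 (l ×ˢ l) (frontier V ∩ B) := by
    refine Metric.tendstoUniformlyOn_iff.2 fun ε hε => ?_
    filter_upwards [hCauchy _ (dist_mem_uniformity hε)] with i hi z hz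
    rw [Pi.zero_apply, dist_zero_left, Pi.sub_apply, ← dist_eq_norm]
    exact hi z hz
  have hloc : ∀ z ∈ closure V ∩ B, ∃ N ∈ 𝓝 z, UniformCauchySeqOn F l (closure V ∩ B ∩ N) := by
    intro z hz
    obtain ⟨N, hN, hvan⟩ := hV.vanishesNear (fun i : ι × ι => (hF i.1).sub (hF i.2)) hdiff hz
    refine ⟨N, hN, fun u hu => ?_⟩
    obtain ⟨ε, hε, hεu⟩ := Metric.mem_uniformity_dist.1 hu
    filter_upwards [Metric.tendstoUniformlyOn_iff.1 hvan ε hε] with i hi w hw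
    refine hεu ?_
    rw [dist_eq_norm, ← Pi.sub_apply, ← dist_zero_left]
    exact hi w hw
  have hlim : ∀ z, ∃ w, z ∈ closure V ∩ B → Tendsto (fun i => F i z) l (𝓝 w) := fun z => by
    by_cases hz : z ∈ closure V ∩ B
    · obtain ⟨N, hN, hUC⟩ := hloc z hz
      obtain ⟨w, hw⟩ := cauchy_iff_exists_le_nhds.1 (hUC.cauchy_map ⟨hz, mem_of_mem_nhds hN⟩)
      exact ⟨w, fun _ => hw⟩
    · exact ⟨0, fun h => absurd h hz⟩
  choose G hG using hlim
  refine ⟨G, tendstoLocallyUniformlyOn_of_forall_exists_nhds fun z hz => ?_⟩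
  obtain ⟨N, hN, hUC⟩ := hloc z hz
  exact ⟨_, inter_mem self_mem_nhdsWithin (mem_nhdsWithin_of_mem_nhds hN),
    hUC.tendstoUniformlyOn_of_tendsto fun w hw => hG w hw.1⟩

theorem IsRegularSide.hasBoundedExtension_of_tendstoUniformlyOn (hV : IsRegularSide B V) [l.NeBot]
    {g : ι → ℂ → ℂ} {f : ℂ → ℂ} (hg : ∀ i, HasBoundedExtension B V M (g i))
    (hgf : TendstoUniformlyOn g f l (frontier V ∩ B)) : HasBoundedExtension B V M f := by
  choose F hF hFg using hg
  have hFf : TendstoUniformlyOn F f l (frontier V ∩ B) :=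
    hgf.congr (.of_forall fun i => (hFg i).symm)
  obtain ⟨G, hG⟩ := hV.exists_tendstoLocallyUniformlyOn hF hFf.uniformCauchySeqOn
  have hVsub : V ⊆ closure V ∩ B := subset_inter subset_closure hV.subset
  have hsub : frontier V ∩ B ⊆ closure V ∩ B := inter_subset_inter_left _ frontier_subset_closure
  refine ⟨G, ⟨(hG.mono hVsub).differentiableOn (.of_forall fun i => (hF i).differentiableOn)
    hV.isOpen, fun z hz => ?_, hG.continuousOn (.of_forall fun i => (hF i).continuousOn)⟩,
    fun z hz => tendsto_nhds_unique (hG.tendsto_at (hsub hz)) (hFf.tendsto_at hz)⟩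
  exact le_of_tendsto (hG.tendsto_at (hVsub hz)).norm (.of_forall fun i => (hF i).norm_le z hz)

theorem IsRegularSide.eqOn_zero (hV : IsRegularSide B V) {H : ℂ → ℂ}
    (hH : IsBoundedHolomorphic B V M H) (h : EqOn H 0 (frontier V ∩ B)) : EqOn H 0 V := by
  intro z hz
  have hconst : TendstoUniformlyOn (fun _ : Unit => H) 0 ⊤ (frontier V ∩ B) :=
    Metric.tendstoUniformlyOn_iff.2 fun ε hε => .of_forall fun _ w hw => by simpa [h hw]
  obtain ⟨N, hN, hvan⟩ := hV.vanishesNear (fun _ => hH) hconst ⟨subset_closure hz, hV.subset hz⟩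
  exact tendsto_nhds_unique tendsto_const_nhds
    (hvan.tendsto_at ⟨⟨subset_closure hz, hV.subset hz⟩, mem_of_mem_nhds hN⟩)

-- Multiplying by `z - c` clears the pole, and at `c` itself the product vanishes.
theorem IsRegularSide.eq_zero_of_hasBoundedExtension_add_div_sub (hV : IsRegularSide B V) {M' : ℝ}
    {f : ℂ → ℂ} {a c : ℂ} (hc : c ∈ V) (hf : HasBoundedExtension B V M f)
    (hfa : HasBoundedExtension B V M' fun z => f z + a / (z - c)) : a = 0 := by
  obtain ⟨F, hF, hFf⟩ := hf
  obtain ⟨G, hG, hGf⟩ := hfa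
  have hGF := hG.sub hF
  obtain ⟨D, hD⟩ := hV.isBounded.isCompact_closure.exists_bound_of_continuousOn
    (f := fun z : ℂ => z - c) (by fun_prop)
  have hH : IsBoundedHolomorphic B V (D * (M' + M) + ‖a‖) fun z => (z - c) * (G - F) z - a := by
    refine ⟨((differentiableOn_id.sub_const c).mul hGF.differentiableOn).sub_const a,
      fun z hz => norm_sub_le_of_le ?_ le_rfl,
      ((by fun_prop : ContinuousOn (fun z => z - c) _).mul hGF.continuousOn).sub continuousOn_const⟩
    have hDz := hD z (subset_closure hz)
    have hD0 := (norm_nonneg _).trans hDz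
    rw [norm_mul]
    gcongr
    exact hGF.norm_le z hz
  have hzero := hV.eqOn_zero hH (fun z hz => ?_) hc
  · simpa using hzero
  · have hzc : z - c ≠ 0 := sub_ne_zero.2 fun h => (hV.isOpen.frontier_eq ▸ hz.1).2 (h ▸ hc)
    simp only [Pi.sub_apply, Pi.zero_apply]
    rw [hGf hz, hFf hz, add_sub_cancel_left, mul_div_cancel₀ _ hzc, sub_self]

end RegularSides

section GenericPoints

variable {E : Type*} [NormedAddCommGroup E] [NormedSpace ℝ E]

theorem exists_mem_sphere_eq_antipode (hE : 1 < Module.rank ℝ E) {c : E} {r : ℝ} (hr : 0 ≤ r)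
    {g : E → ℝ} (hg : ContinuousOn g (sphere c r)) :
    ∃ v : E, ‖v‖ = r ∧ g (c + v) = g (c - v) := by
  have : Nontrivial E := rank_pos_iff_nontrivial (R := ℝ).1 (zero_lt_one.trans hE)
  obtain ⟨v, hv⟩ := (isConnected_sphere hE 0 hr).nonempty
  have hmaps : MapsTo (c + ·) (sphere 0 r) (sphere c r) := fun w hw => by
    simpa [dist_eq_norm] using hw
  have hmaps' : MapsTo (c - ·) (sphere 0 r) (sphere c r) := fun w hw => by
    simpa [dist_eq_norm] using hw
  have hadd : ContinuousOn (fun w => g (c + w)) (sphere 0 r) := hg.comp (by fun_prop) hmaps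
  have hsub : ContinuousOn (fun w => g (c - w)) (sphere 0 r) := hg.comp (by fun_prop) hmaps'
  have hneg : -v ∈ sphere (0 : E) r := by simpa using hv
  have hpre := (isConnected_sphere hE 0 hr).isPreconnected
  obtain ⟨w, hw, heq⟩ : ∃ w ∈ sphere (0 : E) r, g (c + w) = g (c - w) := by
    rcases le_total (g (c + v)) (g (c - v)) with h | h
    · exact hpre.intermediate_value₂ hv hneg hadd hsub h (by simpa [sub_eq_add_neg] using h)
    · exact hpre.intermediate_value₂ hneg hv hadd hsub (by simpa [sub_eq_add_neg] using h) h
  exact ⟨w, by simpa using hw, heq⟩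

theorem not_injOn_of_mem_nhds (hE : 1 < Module.rank ℝ E) {c : E} {U : Set E} (hU : U ∈ 𝓝 c)
    {g : E → ℝ} (hg : ContinuousOn g U) : ¬ InjOn g U := by
  intro hinj
  obtain ⟨r, hr, hrU⟩ := nhds_basis_closedBall.mem_iff.1 hU
  obtain ⟨v, hv, heq⟩ := exists_mem_sphere_eq_antipode hE hr.le
    (hg.mono (sphere_subset_closedBall.trans hrU))
  have hvv : c + v = c - v :=
    hinj (hrU (by simp [hv])) (hrU (by simp [mem_closedBall, hv])) heq
  have hv0 : v = 0 := by
    have hneg : v = -v := by simpa [sub_eq_add_neg] using hvv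
    have htwo : (2 : ℝ) • v = 0 := by rwa [two_smul, add_eq_zero_iff_eq_neg]
    simpa using htwo
  exact hr.ne' (by rw [← hv, hv0, norm_zero])

theorem interior_image_eq_empty_of_injOn (hE : 1 < Module.rank ℝ E) {γ : ℝ → E} {K : Set ℝ}
    (hK : IsCompact K) (hγ : ContinuousOn γ K) (hinj : InjOn γ K) : interior (γ '' K) = ∅ := by
  by_contra hne
  obtain ⟨c, hc⟩ := nonempty_iff_ne_empty.2 hne
  have hinv : LeftInvOn (Function.invFunOn γ K) γ K := hinj.leftInvOn_invFunOn
  have hcont : ContinuousOn (Function.invFunOn γ K) (γ '' K) :=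
    continuousOn_image_of_comp hK hγ (continuousOn_id.congr hinv)
  exact not_injOn_of_mem_nhds hE (mem_interior_iff_mem_nhds.1 hc) hcont
    (Function.invFunOn_injOn_image γ K)

end GenericPoints

section Intervals

variable {I : Set ℝ}

theorem isLocallyClosed_of_ordConnected (hI : I.OrdConnected) : IsLocallyClosed I := by
  rcases hI.isPreconnected.mem_intervals with h | h | h | h | h | h | h | h | h | h <;> rw [h]
  exacts [isClosed_Icc.isLocallyClosed,
    isClosed_Ici.isLocallyClosed.inter isOpen_Iio.isLocallyClosed,
    isOpen_Ioi.isLocallyClosed.inter isClosed_Iic.isLocallyClosed, isOpen_Ioo.isLocallyClosed,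
    isClosed_Ici.isLocallyClosed, isOpen_Ioi.isLocallyClosed, isClosed_Iic.isLocallyClosed,
    isOpen_Iio.isLocallyClosed, isOpen_univ.isLocallyClosed, isOpen_empty.isLocallyClosed]

theorem exists_isCompact_mem_nhdsWithin [LocallyCompactSpace I] {t : ℝ} {U : Set ℝ} (ht : t ∈ I)
    (hU : U ∈ 𝓝[I] t) :
    ∃ K ⊆ U ∩ I, IsCompact K ∧ K ∈ 𝓝[I] t := by
  obtain ⟨K, hK, hKU, hKc⟩ := local_compact_nhds (preimage_coe_mem_nhds_subtype (a := ⟨t, ht⟩).2 hU)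
  refine ⟨(↑) '' K, ?_, hKc.image continuous_subtype_val, ?_⟩
  · rintro _ ⟨s, hs, rfl⟩
    exact ⟨hKU hs, s.2⟩
  · rw [nhdsWithin_eq_map_subtype_coe ht]
    exact image_mem_map hK

theorem exists_mem_notMem_image [LocallyCompactSpace I] {γ : ℝ → ℂ} (hγ : ContinuousOn γ I)
    (hloc : LocallyInjOn γ I) {V : Set ℂ} (hV : IsOpen V) (hne : V.Nonempty) :
    ∃ c ∈ V, c ∉ γ '' I := by
  have hnhds : ∀ t, ∃ K, t ∈ I → K ⊆ I ∧ IsCompact K ∧ InjOn γ K ∧ K ∈ 𝓝[I] t := by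
    intro t
    by_cases ht : t ∈ I
    · obtain ⟨ε, hε, hinj⟩ := hloc t ht
      obtain ⟨K, hKU, hK, hKt⟩ := exists_isCompact_mem_nhdsWithin ht
        (mem_nhdsWithin_of_mem_nhds (Ioo_mem_nhds (sub_lt_self t hε) (lt_add_of_pos_right t hε)))
      exact ⟨K, fun _ => ⟨fun s hs => (hKU hs).2, hK, hinj.mono fun s hs => (hKU hs).symm, hKt⟩⟩
    · exact ⟨∅, fun h => absurd h ht⟩
  choose K hKI hK hinj hKt using hnhds
  obtain ⟨T, hTI, hT, hcover⟩ := TopologicalSpace.countable_cover_nhdsWithin hKt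
  have hcont : ∀ t ∈ T, ContinuousOn γ (K t) := fun t ht => hγ.mono (hKI t (hTI ht))
  have hdense : Dense (⋂ t ∈ T, (γ '' K t)ᶜ) := by
    refine dense_biInter_of_isOpen (fun t ht => ?_) hT fun t ht => ?_
    · exact ((hK t (hTI ht)).image_of_continuousOn (hcont t ht)).isClosed.isOpen_compl
    · exact interior_eq_empty_iff_dense_compl.1 (interior_image_eq_empty_of_injOn
        (by simp [Complex.rank_real_complex]) (hK t (hTI ht)) (hcont t ht) (hinj t (hTI ht)))
  obtain ⟨c, hcV, hc⟩ := hdense.inter_open_nonempty V hV hne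
  refine ⟨c, hcV, ?_⟩
  rintro ⟨s, hs, rfl⟩
  obtain ⟨t, ht, hst⟩ := mem_iUnion₂.1 (hcover hs)
  exact mem_iInter₂.1 hc t ht (mem_image_of_mem γ hst)

theorem IsBoundaryPatch.isRegularSide {γ : ℝ → ℂ} {p q : ℝ} {B V : Set ℂ}
    (hP : IsBoundaryPatch I γ p q B V) (hγ : ContinuousOn γ (Icc p q)) : IsRegularSide B V where
  isOpen_window := hP.isOpen_window
  isOpen := hP.isOpen
  isConnected := hP.isConnected
  isBounded := hP.isBounded
  subset := hP.subset
  frontier_inter_nonempty := hP.frontier_inter_nonempty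
  exists_joinedIn_compl := by
    intro y hy r hr
    obtain ⟨t, ht, rfl⟩ := hP.frontier_inter_subset hy
    obtain ⟨δ, hδ, hball⟩ := Metric.mem_nhdsWithin_iff.1 ((hγ t ht) (ball_mem_nhds (γ t) hr))
    obtain ⟨-, s, s', -, -, hss', hsub, -⟩ := hP.exists_isJordanDomain
    have hacc : AccPt t (𝓟 (Icc p q)) := by
      refine isPreconnected_Icc.preperfect_of_nontrivial ?_ t ht
      exact ⟨s, hsub (left_mem_Icc.2 hss'.le), s', hsub (right_mem_Icc.2 hss'.le), hss'.ne⟩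
    obtain ⟨t', ht', hne⟩ := accPt_iff_nhds.1 hacc _ (ball_mem_nhds t hδ)
    have hconv : Convex ℝ (ball t δ ∩ Icc p q) := (convex_ball t δ).inter (convex_Icc p q)
    have hmem : t ∈ ball t δ ∩ Icc p q := ⟨mem_ball_self hδ, ht⟩
    have hpath : IsPathConnected (γ '' (ball t δ ∩ Icc p q)) :=
      (hconv.isPathConnected ⟨t, hmem⟩).image' (hγ.mono inter_subset_right)
    refine ⟨γ t', fun h => hne (hP.injOn ht'.2 ht h), ?_⟩
    refine (hpath.joinedIn _ (mem_image_of_mem γ ht') _ (mem_image_of_mem γ hmem)).mono ?_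
    rintro _ ⟨u, hu, rfl⟩
    exact ⟨hP.disjoint.notMem_of_mem_right (mem_image_of_mem γ hu.2), hball hu⟩

end Intervals

section LimitsOfDerivatives

variable {E : Type*} [NormedAddCommGroup E] [NormedSpace ℝ E] {ι : Type*} {l : Filter ι} [l.NeBot]
  {I : Set ℝ}

theorem norm_image_sub_le_of_eventually_norm_derivWithin_le {F F' : ι → ℝ → E} {g : ℝ → E}
    {S : Set ℝ} {C : ℝ} {h h' : ℝ → E} (hS : Convex ℝ S)
    (hF : ∀ i, ∀ t ∈ S, HasDerivWithinAt (F i) (F' i t) S t)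
    (hh : ∀ t ∈ S, HasDerivWithinAt h (h' t) S t)
    (hg : ∀ t ∈ S, Tendsto (fun i => F i t) l (𝓝 (g t)))
    (hC : ∀ᶠ i in l, ∀ t ∈ S, ‖F' i t - h' t‖ ≤ C) {x y : ℝ} (hx : x ∈ S) (hy : y ∈ S) :
    ‖g y - h y - (g x - h x)‖ ≤ C * ‖y - x‖ := by
  refine le_of_tendsto (((hg y hy).sub_const (h y)).sub ((hg x hx).sub_const (h x))).norm ?_
  filter_upwards [hC] with i hi
  exact hS.norm_image_sub_le_of_norm_hasDerivWithin_le
    (fun t ht => (hF i t ht).sub (hh t ht)) hi hx hy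

theorem hasDerivWithinAt_of_tendstoLocallyUniformlyOn (hI : Convex ℝ I) {F F' : ι → ℝ → E}
    {g g' : ℝ → E} (hF : ∀ i, ∀ t ∈ I, HasDerivWithinAt (F i) (F' i t) I t)
    (hg : ∀ t ∈ I, Tendsto (fun i => F i t) l (𝓝 (g t)))
    (hF' : TendstoLocallyUniformlyOn F' g' l I) {x : ℝ} (hx : x ∈ I) :
    HasDerivWithinAt g (g' x) I x := by
  rw [hasDerivWithinAt_iff_isLittleO, Asymptotics.isLittleO_iff]
  intro ε hε
  obtain ⟨T, hT, hunif⟩ := Metric.tendstoLocallyUniformlyOn_iff.1 hF' (ε / 4) (by positivity) x hx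
  obtain ⟨r, hr, hrT⟩ := Metric.mem_nhdsWithin_iff.1 hT
  obtain ⟨i, hi⟩ := hunif.exists
  have hxS : x ∈ ball x r ∩ I := ⟨mem_ball_self hr, hx⟩
  have hclose : ∀ᶠ j in l, ∀ t ∈ ball x r ∩ I, ‖F' j t - F' i t‖ ≤ ε / 2 := by
    filter_upwards [hunif] with j hj t ht
    rw [← dist_eq_norm]
    linarith [dist_triangle_left (F' j t) (F' i t) (g' t), hj t (hrT ht), hi t (hrT ht)]
  have hmono : ∀ j, ∀ t ∈ ball x r ∩ I, HasDerivWithinAt (F j) (F' j t) (ball x r ∩ I) t :=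
    fun j t ht => (hF j t ht.2).mono inter_subset_right
  have hdiff : ∀ᶠ y in 𝓝[I] x, ‖F i y - F i x - (y - x) • F' i x‖ ≤ ε / 4 * ‖y - x‖ :=
    Asymptotics.isLittleO_iff.1 (hasDerivWithinAt_iff_isLittleO.1 (hF i x hx)) (by positivity)
  filter_upwards [hdiff, inter_mem_nhdsWithin I (ball_mem_nhds x hr)] with y hy hyS
  have hgF := norm_image_sub_le_of_eventually_norm_derivWithin_le
    ((convex_ball x r).inter hI) hmono (hmono i) (fun t ht => hg t ht.2) hclose hxS hyS.symm
  have hg'F : ‖(y - x) • (F' i x - g' x)‖ ≤ ε / 4 * ‖y - x‖ := by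
    rw [norm_smul, mul_comm, ← dist_eq_norm, dist_comm]
    gcongr
    exact (hi x (hrT hxS)).le
  calc ‖g y - g x - (y - x) • g' x‖
      = ‖(g y - F i y - (g x - F i x)) + (F i y - F i x - (y - x) • F' i x)
          + (y - x) • (F' i x - g' x)‖ := by rw [smul_sub]; congr 1; abel
    _ ≤ ε / 2 * ‖y - x‖ + ε / 4 * ‖y - x‖ + ε / 4 * ‖y - x‖ :=
        norm_add_le_of_le (norm_add_le_of_le hgF hy) hg'F
    _ = ε * ‖y - x‖ := by ring

theorem contDiffOn_and_eqOn_iteratedDerivWithin_of_tendstoLocallyUniformlyOn (hI : Convex ℝ I)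
    (hU : UniqueDiffOn ℝ I) {k : ℕ∞} {F : ι → ℝ → E} (hF : ∀ i, ContDiffOn ℝ k (F i) I)
    {u : ℕ → ℝ → E} (hu : ∀ j : ℕ, (j : ℕ∞) ≤ k →
      TendstoLocallyUniformlyOn (fun i => iteratedDerivWithin j (F i) I) (u j) l I) :
    ContDiffOn ℝ k (u 0) I ∧
      ∀ j : ℕ, (j : ℕ∞) ≤ k → EqOn (iteratedDerivWithin j (u 0) I) (u j) I := by
  have hderiv : ∀ j : ℕ, (j : ℕ∞) < k → ∀ t ∈ I, HasDerivWithinAt (u j) (u (j + 1) t) I t := by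
    intro j hj t ht
    refine hasDerivWithinAt_of_tendstoLocallyUniformlyOn hI (fun i s hs => ?_)
      (fun s hs => (hu j hj.le).tendsto_at hs) (hu (j + 1) (Order.add_one_le_of_lt hj)) ht
    rw [iteratedDerivWithin_succ]
    exact ((hF i).differentiableOn_iteratedDerivWithin (mod_cast hj) hU s hs).hasDerivWithinAt
  have heq : ∀ j : ℕ, (j : ℕ∞) ≤ k → EqOn (iteratedDerivWithin j (u 0) I) (u j) I := by
    intro j
    induction j with
    | zero => exact fun _ _ _ => by rw [iteratedDerivWithin_zero]
    | succ j ih =>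
      intro hj t ht
      have hjk : (j : ℕ∞) < k := (Nat.cast_lt.2 j.lt_succ_self).trans_le hj
      rw [iteratedDerivWithin_succ, derivWithin_congr (ih hjk.le) (ih hjk.le ht)]
      exact (hderiv j hjk t ht).derivWithin (hU t ht)
  refine ⟨contDiffOn_of_continuousOn_differentiableOn_deriv (fun j hj => ?_) fun j hj => ?_, heq⟩
  · refine ContinuousOn.congr ((hu j hj).continuousOn (Eventually.frequently ?_)) (heq j hj)
    exact .of_forall fun i => (hF i).continuousOn_iteratedDerivWithin (mod_cast hj) hU
  · exact fun t ht => (hderiv j hj t ht).differentiableWithinAt.congr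
      (heq j hj.le) (heq j hj.le ht)

end LimitsOfDerivatives

section CkSpace

variable {k : ℕ∞} {I : Set ℝ} {γ : ℝ → ℂ}

/-- The sequence of the derivatives `(f ∘ γ)⁽ʲ⁾`, with `0` in place of those of order `j > k`. It
takes values in the space of sequences of functions with uniform convergence on compact sets, from
which `ckTop` is induced. -/
noncomputable def ckJet (f : CkGamma k I γ) : ℕ → UniformOnFun I ℂ {K : Set I | IsCompact K} :=
  fun j => UniformOnFun.ofFun {K : Set ↥I | IsCompact K} (fun t : ↥I => if (j : ℕ∞) ≤ k then
    iteratedDerivWithin j (fun s => f.1 (γ s)) I (t : ℝ) else 0)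

/-- The uniformity of uniform convergence of the derivatives on compact sets. Its topology is
definitionally `ckTop`. -/
noncomputable instance : UniformSpace (CkGamma k I γ) :=
  (UniformSpace.comap ckJet inferInstance).replaceTopology (i := ckTop k I γ) rfl

theorem isUniformInducing_ckJet : IsUniformInducing (ckJet : CkGamma k I γ → _) := ⟨rfl⟩

theorem tendstoLocallyUniformlyOn_of_tendsto_ckJet [LocallyCompactSpace I] {ι : Type*}
    {l : Filter ι} {g : ι → CkGamma k I γ}
    {u : ℕ → UniformOnFun I ℂ {K : Set I | IsCompact K}}
    (hu : Tendsto (fun i => ckJet (g i)) l (𝓝 u)) {j : ℕ} (hj : (j : ℕ∞) ≤ k) {v : ℝ → ℂ}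
    (hv : ∀ t : I, v t = UniformOnFun.toFun _ (u j) t) :
    TendstoLocallyUniformlyOn (fun i => iteratedDerivWithin j (fun s => (g i).1 (γ s)) I)
      v l I := by
  have hcomp := UniformOnFun.tendsto_iff_tendstoUniformlyOn.1 (tendsto_pi_nhds.1 hu j)
  rw [tendstoLocallyUniformlyOn_iff_tendstoLocallyUniformly_comp_coe,
    tendstoLocallyUniformly_iff_forall_isCompact]
  intro K hK
  refine ((hcomp K hK).congr_right fun t _ => (hv t).symm).congr (.of_forall fun i t _ => ?_)
  simp [ckJet, hj]

theorem toFun_eq_zero_of_tendsto_ckJet {ι : Type*} {l : Filter ι} [l.NeBot]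
    {g : ι → CkGamma k I γ} {u : ℕ → UniformOnFun I ℂ {K : Set I | IsCompact K}}
    (hu : Tendsto (fun i => ckJet (g i)) l (𝓝 u)) {j : ℕ} (hj : ¬ (j : ℕ∞) ≤ k) (t : I) :
    UniformOnFun.toFun _ (u j) t = 0 := by
  have hcomp := UniformOnFun.tendsto_iff_tendstoUniformlyOn.1 (tendsto_pi_nhds.1 hu j)
  have hlim := (hcomp {t} isCompact_singleton).tendsto_at rfl
  refine tendsto_nhds_unique hlim (tendsto_const_nhds.congr fun i => ?_)
  simp [ckJet, hj]

theorem isClosed_range_ckJet [LocallyCompactSpace I] (hI : Convex ℝ I) (hU : UniqueDiffOn ℝ I) :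
    IsClosed (range (ckJet : CkGamma k I γ → _)) := by
  classical
  refine isClosed_of_closure_subset fun u hu => ?_
  have := mem_closure_iff_nhdsWithin_neBot.1 hu
  let l := comap (ckJet : CkGamma k I γ → _) (𝓝[range (ckJet : CkGamma k I γ → _)] u)
  have : l.NeBot := NeBot.comap_of_range_mem ‹_› self_mem_nhdsWithin
  have hl : Tendsto ckJet l (𝓝 u) := tendsto_comap.mono_right nhdsWithin_le_nhds
  let v : ℕ → ℝ → ℂ := fun j t =>
    if ht : t ∈ I then UniformOnFun.toFun _ (u j) ⟨t, ht⟩ else 0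
  have hv : ∀ j, ∀ t : I, v j t = UniformOnFun.toFun _ (u j) t := fun j t => by simp [v]
  have hlim : ∀ j : ℕ, (j : ℕ∞) ≤ k → TendstoLocallyUniformlyOn
      (fun g : CkGamma k I γ => iteratedDerivWithin j (fun s => g.1 (γ s)) I) (v j) l I :=
    fun j hj => tendstoLocallyUniformlyOn_of_tendsto_ckJet hl hj (hv j)
  obtain ⟨hcd, hiter⟩ := contDiffOn_and_eqOn_iteratedDerivWithin_of_tendstoLocallyUniformlyOn hI hU
    (fun g => g.2) hlim
  let f : ℂ → ℂ := fun z => limUnder l fun g : CkGamma k I γ => g.1 z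
  have hf : EqOn (fun t => f (γ t)) (v 0) I := fun t ht => by
    simpa using ((hlim 0 zero_le).tendsto_at ht).limUnder_eq
  refine ⟨⟨f, hcd.congr hf⟩, ?_⟩
  refine funext fun j => (UniformOnFun.toFun _).injective (funext fun t => ?_)
  by_cases hj : (j : ℕ∞) ≤ k
  · rw [← hv, ← hiter j hj t.2, ← iteratedDerivWithin_congr hf t.2]
    exact if_pos hj
  · rw [toFun_eq_zero_of_tendsto_ckJet hl hj t]
    exact if_neg hj

theorem baireSpace_ckGamma [LocallyCompactSpace I] (hI : Convex ℝ I) (hU : UniqueDiffOn ℝ I) :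
    BaireSpace (CkGamma k I γ) := by
  have : CompleteSpace (CkGamma k I γ) :=
    isUniformInducing_ckJet.completeSpace (isClosed_range_ckJet hI hU).isComplete
  let E := CompactExhaustion.choice I
  have : (uniformity (UniformOnFun I ℂ {K : Set I | IsCompact K})).IsCountablyGenerated :=
    UniformOnFun.isCountablyGenerated_uniformity _ E.isCompact (fun _ _ h => E.subset h)
      fun K hK => E.exists_superset_of_isCompact hK
  have : (uniformity (CkGamma k I γ)).IsCountablyGenerated := comap.isCountablyGenerated _ _
  infer_instance

theorem continuous_ckGamma_of_iteratedDerivWithin {X : Type*} [TopologicalSpace X]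
    {g : X → CkGamma k I γ} (hg : ∀ j : ℕ, (j : ℕ∞) ≤ k →
      Continuous fun p : X × I => iteratedDerivWithin j (fun s => (g p.1).1 (γ s)) I p.2) :
    Continuous g := by
  refine isUniformInducing_ckJet.isInducing.continuous_iff.2 (continuous_pi fun j => ?_)
  have hjet : Continuous fun p : X × I =>
      if (j : ℕ∞) ≤ k then iteratedDerivWithin j (fun s => (g p.1).1 (γ s)) I p.2 else 0 := by
    split_ifs with hj
    exacts [hg j hj, continuous_const]
  exact ContinuousMap.isUniformEmbedding_toUniformOnFunIsCompact.uniformContinuous.continuous.comp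
    (ContinuousMap.curry ⟨_, hjet⟩).continuous

theorem exists_continuous_add_const_mul (hU : UniqueDiffOn ℝ I) (f : CkGamma k I γ) {h : ℂ → ℂ}
    (hh : ContDiffOn ℝ k (fun t => h (γ t)) I) :
    ∃ g : ℂ → CkGamma k I γ, Continuous g ∧ ∀ s, (g s).1 = fun z => f.1 z + s * h z := by
  let g : ℂ → CkGamma k I γ := fun s =>
    ⟨fun z => f.1 z + s * h z, f.2.add (contDiffOn_const.mul hh)⟩
  refine ⟨g, continuous_ckGamma_of_iteratedDerivWithin fun j hj => ?_, fun _ => rfl⟩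
  have hiter : ∀ (s : ℂ) (t : I), iteratedDerivWithin j (fun t => (g s).1 (γ t)) I t =
      iteratedDerivWithin j (fun t => f.1 (γ t)) I t +
        s * iteratedDerivWithin j (fun t => h (γ t)) I t := by
    intro s t
    have hfj : ContDiffWithinAt ℝ j (fun t => f.1 (γ t)) I t := (f.2.of_le (mod_cast hj)) t t.2
    have hhj : ContDiffWithinAt ℝ j (fun t => h (γ t)) I t := (hh.of_le (mod_cast hj)) t t.2
    rw [← iteratedDerivWithin_const_mul t.2 hU s hhj]
    exact iteratedDerivWithin_fun_add t.2 hU hfj (contDiffWithinAt_const.mul hhj)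
  have hcont : ∀ {u : ℝ → ℂ}, ContDiffOn ℝ k u I → Continuous fun t : I =>
      iteratedDerivWithin j u I t := fun hu =>
    (hu.continuousOn_iteratedDerivWithin (mod_cast hj) hU).domRestrict
  simp only [hiter]
  exact ((hcont f.2).comp continuous_snd).add (continuous_fst.mul ((hcont hh).comp continuous_snd))

end CkSpace

section ExtensionSets

variable {k : ℕ∞} {I : Set ℝ} {γ : ℝ → ℂ} {B V : Set ℂ} {M : ℝ}

theorem tendstoUniformlyOn_image_of_tendsto {ι : Type*} {l : Filter ι} {g : ι → CkGamma k I γ}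
    {f : CkGamma k I γ} (hg : Tendsto g l (𝓝 f)) {K : Set ℝ} (hK : IsCompact K) (hKI : K ⊆ I) :
    TendstoUniformlyOn (fun i => (g i).1) f.1 l (γ '' K) := by
  have hjet := (isUniformInducing_ckJet.uniformContinuous.continuous.tendsto f).comp hg
  have hzero := UniformOnFun.tendsto_iff_tendstoUniformlyOn.1 (tendsto_pi_nhds.1 hjet 0)
  have hK' : IsCompact ((↑) ⁻¹' K : Set I) := by
    rwa [Subtype.isCompact_iff, Subtype.image_preimage_coe, inter_eq_right.2 hKI]
  intro W hW
  filter_upwards [hzero _ hK' W hW] with i hi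
  rintro _ ⟨t, ht, rfl⟩
  simpa [ckJet] using hi ⟨t, hKI ht⟩ ht

theorem IsRegularSide.isClosed_setOf_hasBoundedExtension (hV : IsRegularSide B V) {K : Set ℝ}
    (hK : IsCompact K) (hKI : K ⊆ I) (hVK : frontier V ∩ B ⊆ γ '' K) :
    IsClosed {f : CkGamma k I γ | HasBoundedExtension B V M f.1} := by
  refine isClosed_of_closure_subset fun f hf => ?_
  have := mem_closure_iff_comap_neBot.1 hf
  exact hV.hasBoundedExtension_of_tendstoUniformlyOn
    (g := fun g : {f : CkGamma k I γ | HasBoundedExtension B V M f.1} => g.1.1) (fun g => g.2)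
    ((tendstoUniformlyOn_image_of_tendsto tendsto_comap hK hKI).mono hVK)

theorem IsRegularSide.interior_setOf_hasBoundedExtension_eq_empty (hV : IsRegularSide B V)
    (hU : UniqueDiffOn ℝ I) (hγ : ContDiffOn ℝ k γ I) {c : ℂ} (hc : c ∈ V) (hcI : c ∉ γ '' I) :
    interior {f : CkGamma k I γ | HasBoundedExtension B V M f.1} = ∅ := by
  refine eq_empty_of_forall_notMem fun f hf => ?_
  have hh : ContDiffOn ℝ k (fun t => (γ t - c)⁻¹) I :=
    (hγ.sub contDiffOn_const).inv fun t ht h => hcI ⟨t, ht, sub_eq_zero.1 h⟩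
  obtain ⟨g, hg, hgf⟩ := exists_continuous_add_const_mul hU f (h := fun z => (z - c)⁻¹) hh
  have hg0 : g 0 = f := Subtype.ext (by simp [hgf])
  have hnear : ∀ᶠ s in 𝓝 (0 : ℂ), HasBoundedExtension B V M (g s).1 :=
    hg.continuousAt.eventually (hg0 ▸ mem_interior_iff_mem_nhds.1 hf)
  obtain ⟨s, hs0, hs⟩ := ((hnear.filter_mono nhdsWithin_le_nhds).and
    (self_mem_nhdsWithin (s := {0}ᶜ))).exists
  have hfM : f ∈ {f : CkGamma k I γ | HasBoundedExtension B V M f.1} := interior_subset hf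
  refine hs (hV.eq_zero_of_hasBoundedExtension_add_div_sub hc hfM (M' := M) ?_)
  simpa [hgf, div_eq_mul_inv] using hs0

theorem IsBoundaryPatch.isOpen_compl_setOf_hasBoundedExtension {p q : ℝ}
    (hP : IsBoundaryPatch I γ p q B V) (hγ : ContinuousOn γ I) :
    IsOpen {f : CkGamma k I γ | HasBoundedExtension B V M f.1}ᶜ :=
  ((hP.isRegularSide (hγ.mono hP.Icc_subset)).isClosed_setOf_hasBoundedExtension
    isCompact_Icc hP.Icc_subset hP.frontier_inter_subset).isOpen_compl

theorem IsBoundaryPatch.dense_compl_setOf_hasBoundedExtension [LocallyCompactSpace I] {p q : ℝ}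
    (hP : IsBoundaryPatch I γ p q B V) (hU : UniqueDiffOn ℝ I) (hγ : ContDiffOn ℝ k γ I)
    (hloc : LocallyInjOn γ I) :
    Dense {f : CkGamma k I γ | HasBoundedExtension B V M f.1}ᶜ := by
  obtain ⟨c, hc, hcI⟩ := exists_mem_notMem_image hγ.continuousOn hloc hP.isOpen
    hP.isConnected.nonempty
  have hV := hP.isRegularSide (hγ.continuousOn.mono hP.Icc_subset)
  exact interior_eq_empty_iff_dense_compl.1
    (hV.interior_setOf_hasBoundedExtension_eq_empty hU hγ hc hcI)

theorem IsBoundaryPatch.uniqueDiffOn {p q : ℝ} (hP : IsBoundaryPatch I γ p q B V)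
    (hI : I.OrdConnected) : UniqueDiffOn ℝ I := by
  obtain ⟨-, s, t, -, -, hst, hsub, -⟩ := hP.exists_isJordanDomain
  refine uniqueDiffOn_convex hI.convex ((nonempty_Ioo.2 hst).mono ?_)
  exact interior_maximal (Ioo_subset_Icc_self.trans (hsub.trans hP.Icc_subset)) isOpen_Ioo

theorem setOf_not_somewhereOneSidedHolExt (hI : I.OrdConnected) (hγ : ContinuousOn γ I)
    (hloc : LocallyInjOn γ I) :
    {f : CkGamma k I γ | ¬ SomewhereOneSidedHolExt I γ f.1} =
      ⋂ P ∈ rationalPatches I γ, ⋂ M : ℕ,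
        {f : CkGamma k I γ | HasBoundedExtension P.1 P.2 M f.1}ᶜ := by
  ext f
  simp only [mem_iInter, mem_compl_iff, mem_ofPred_eq]
  refine ⟨fun hf P hP M hext => ?_, fun hf hext => ?_⟩
  · obtain ⟨p, q, hpq⟩ := hP.1
    exact hf (hpq.somewhereOneSidedHolExt hext)
  · obtain ⟨P, hP, M, hM⟩ := exists_rationalPatch_of_somewhereOneSidedHolExt hI hγ hloc hext
    exact hf P hP M hM

end ExtensionSets

/-- Let `k ≤ l` in `{0,1,2,...} ∪ {∞}`, `I ⊆ ℝ` an interval and `γ : I → ℂ` locally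
injective of class `C^l` on `I`. The class of nowhere one-sided holomorphically
extendable functions `f ∈ C^k(γ)` is a dense and `Gδ` subset of `C^k(γ)`. -/
theorem nowhereOneSidedHolExt_dense_Gdelta
    (l k : ℕ∞) (hkl : k ≤ l) (I : Set ℝ) (hI : I.OrdConnected)
    (γ : ℝ → ℂ) (hloc : LocallyInjOn γ I) (hγ : ContDiffOn ℝ l γ I) :
    @Dense (CkGamma k I γ) (ckTop k I γ) {f | ¬ SomewhereOneSidedHolExt I γ f.1} ∧
    @IsGδ (CkGamma k I γ) (ckTop k I γ) {f | ¬ SomewhereOneSidedHolExt I γ f.1} := by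
  have hγk : ContDiffOn ℝ k γ I := hγ.of_le (mod_cast hkl)
  have := (isLocallyClosed_of_ordConnected hI).locallyCompactSpace
  rw [setOf_not_somewhereOneSidedHolExt hI hγ.continuousOn hloc]
  have hopen : ∀ P ∈ rationalPatches I γ, ∀ M : ℕ,
      IsOpen {f : CkGamma k I γ | HasBoundedExtension P.1 P.2 M f.1}ᶜ := fun P hP M => by
    obtain ⟨p, q, hpq⟩ := hP.1
    exact hpq.isOpen_compl_setOf_hasBoundedExtension hγ.continuousOn
  have hdense : ∀ P ∈ rationalPatches I γ, ∀ M : ℕ,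
      Dense {f : CkGamma k I γ | HasBoundedExtension P.1 P.2 M f.1}ᶜ := fun P hP M => by
    obtain ⟨p, q, hpq⟩ := hP.1
    exact hpq.dense_compl_setOf_hasBoundedExtension (hpq.uniqueDiffOn hI) hγk hloc
  refine ⟨?_, .biInter countable_rationalPatches fun P hP => .iInter_of_isOpen (hopen P hP)⟩
  rcases (rationalPatches I γ).eq_empty_or_nonempty with hempty | ⟨P₀, hP₀⟩
  · simp [hempty]
  · obtain ⟨p, q, hpq⟩ := hP₀.1
    have : BaireSpace (CkGamma k I γ) := baireSpace_ckGamma hI.convex (hpq.uniqueDiffOn hI)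
    exact dense_biInter_of_Gδ (fun P hP => .iInter_of_isOpen (hopen P hP)) countable_rationalPatches
      fun P hP => dense_iInter_of_isOpen (hopen P hP) (hdense P hP)
end

section
/- Let p ∈ {0,1,2,...} ∪ {∞}, let Ω ⊆ ℂ be an open and bounded set, let L be a compact subset of Ω, and set G = Ω∖L. Suppose there exists a function f0 ∈ A^p(G) for which there exists no F0 ∈ A^p(Ω) with F0 = f0 on G. Then the set of functions f ∈ A^p(G) for which there exists no F ∈ A^p(Ω) with F = f on G is a dense and Gδ subset of A^p(G). -/
/-!
The functions of `A^p(G)` that extend to `A^p(Ω)` form a proper linear subspace, and `A^p(G)` is a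
topological vector space because the derivatives of its members, being restrictions of continuous
functions on a compact closure, are bounded. A proper subspace has empty interior, so its complement
is dense.

The subspace is also closed, so its complement is even open: if extendable functions converge
uniformly on `G = Ω \ L`, the maximum principle on a neighbourhood of `L` makes their holomorphic
extensions uniformly Cauchy on `Ω`, and the limit is holomorphic by Weierstrass's theorem. A
holomorphic extension of a member of `A^p(G)` is automatically in `A^p(Ω)`, since near the points of
`closure Ω` outside `Ω` the sets `Ω` and `G` agree.
-/

open Set Metric

/-- `f` belongs to `A^p(U)`: `f` is holomorphic on `U` and, for every integer
`j ≤ p`, the derivative `f⁽ʲ⁾` extends continuously to the closure of `U` in `ℂ`. -/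
def MemAp (p : ℕ∞) (U : Set ℂ) (f : ℂ → ℂ) : Prop :=
  DifferentiableOn ℂ f U ∧
    ∀ j : ℕ, (j : ℕ∞) ≤ p →
      ∃ g : ℂ → ℂ, ContinuousOn g (closure U) ∧ Set.EqOn g (iteratedDeriv j f) U

/-- The space `A^p(U)` as a type. -/
def ApSpace (p : ℕ∞) (U : Set ℂ) : Type :=
  {f : ℂ → ℂ // MemAp p U f}

/-- The topology of `A^p(U)` for bounded `U`: uniform convergence on the closure of
`U` of (the continuous extensions of) all derivatives `f⁽ʲ⁾`, `j ≤ p`; by density of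
`U` in its closure this is the topology of uniform convergence on `U` of the
derivatives `f⁽ʲ⁾`, `j ≤ p`. -/
noncomputable def apTop (p : ℕ∞) (U : Set ℂ) : TopologicalSpace (ApSpace p U) :=
  TopologicalSpace.induced
    (fun f => fun j : ℕ =>
      UniformFun.ofFun
        (fun z : ↥U => if (j : ℕ∞) ≤ p then iteratedDeriv j f.1 (z : ℂ) else 0))
    inferInstance


/-- `f ∈ A^p(G)` admits no extension in `A^p(Ω)`: there is no `F ∈ A^p(Ω)` with
`F = f` on `G`. -/
def NoApExtension (p : ℕ∞) (Ω G : Set ℂ) (f : ℂ → ℂ) : Prop :=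
  ¬ ∃ F : ℂ → ℂ, MemAp p Ω F ∧ Set.EqOn F f G

open Filter Topology Bornology
open scoped UniformConvergence
open TopologicalSpace (Opens)

theorem exists_continuousOn_closure_of_diff {X Y : Type*} [TopologicalSpace X]
    [TopologicalSpace Y] {U K : Set X} (hU : IsOpen U) (hK : IsClosed K) (hKU : K ⊆ U)
    {f g : X → Y} (hf : ContinuousOn f U) (hg : ContinuousOn g (closure (U \ K)))
    (hgf : EqOn g f (U \ K)) : ∃ h : X → Y, ContinuousOn h (closure U) ∧ EqOn h f U := by
  classical
  refine ⟨U.piecewise f g, continuousOn_of_locally_continuousOn fun x _ => ?_,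
    piecewise_eqOn U f g⟩
  by_cases hx : x ∈ U
  · exact ⟨U, hU, hx, (hf.congr (piecewise_eqOn U f g)).mono inter_subset_right⟩
  · refine ⟨Kᶜ, hK.isOpen_compl, fun hxK => hx (hKU hxK), ?_⟩
    have closure_inter_subset : closure U ∩ Kᶜ ⊆ closure (U \ K) := hK.isOpen_compl.closure_inter
    refine (hg.mono closure_inter_subset).congr fun y hy => ?_
    by_cases hyU : y ∈ U
    · rw [piecewise_eq_of_mem _ _ _ hyU, hgf ⟨hyU, hy.2⟩]
    · exact piecewise_eq_of_notMem _ _ _ hyU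

theorem dense_compl_of_submodule_ne_top {R M : Type*} [Ring R] [TopologicalSpace R]
    [AddCommGroup M] [TopologicalSpace M] [ContinuousAdd M] [Module R M] [ContinuousSMul R M]
    [(𝓝[{c : R | IsUnit c}] 0).NeBot] {S : Submodule R M} (hS : S ≠ ⊤) : Dense (S : Set M)ᶜ :=
  interior_eq_empty_iff_dense_compl.1 <| not_nonempty_iff_eq_empty.1 fun h =>
    hS (S.eq_top_of_nonempty_interior' h)

section MaximumPrinciple

variable {E V : Type*} [NormedAddCommGroup E] [NormedSpace ℂ E] [NormedAddCommGroup V]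
  [NormedSpace ℂ V] [Nontrivial V] [LocallyCompactSpace V]

theorem norm_le_of_forall_mem_diff_norm_le {U K : Set V} (hU : IsOpen U) (hK : IsCompact K)
    (hKU : K ⊆ U) {f : V → E} (hf : DifferentiableOn ℂ f U) {C : ℝ}
    (hC : ∀ z ∈ U \ K, ‖f z‖ ≤ C) {z : V} (hz : z ∈ U) : ‖f z‖ ≤ C := by
  by_cases hzK : z ∈ K
  · obtain ⟨W, hWo, hKW, hWU, hWc⟩ := exists_open_between_and_isCompact_closure hK hU hKU
    have norm_le_on_frontier : ∀ w ∈ frontier W, ‖f w‖ ≤ C := fun w hw =>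
      hC w ⟨hWU hw.1, fun hwK => (hWo.frontier_eq ▸ hw).2 (hKW hwK)⟩
    exact Complex.norm_le_of_forall_mem_frontier_norm_le (hWc.isBounded.subset subset_closure)
      (hf.mono hWU).diffContOnCl norm_le_on_frontier (subset_closure (hKW hzK))
  · exact hC z ⟨hz, hzK⟩

theorem uniformCauchySeqOn_of_diff {ι : Type*} {U K : Set V} (hU : IsOpen U) (hK : IsCompact K)
    (hKU : K ⊆ U) {l : Filter ι} {F : ι → V → E} (hF : ∀ᶠ i in l, DifferentiableOn ℂ (F i) U)
    (hc : UniformCauchySeqOn F l (U \ K)) : UniformCauchySeqOn F l U := by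
  intro u hu
  obtain ⟨ε, hε, hεu⟩ := Metric.mem_uniformity_dist.1 hu
  filter_upwards [hc _ (Metric.dist_mem_uniformity (half_pos hε)), hF.prod_mk hF]
    with ⟨i, j⟩ hij ⟨hi, hj⟩ z hz
  have norm_sub_le : ‖(F i - F j) z‖ ≤ ε / 2 :=
    norm_le_of_forall_mem_diff_norm_le hU hK hKU (hi.sub hj)
      (fun w hw => by simpa [dist_eq_norm] using (hij w hw).le) hz
  refine hεu ?_
  rw [dist_eq_norm]
  exact norm_sub_le.trans_lt (half_lt_self hε)

theorem exists_differentiableOn_eqOn_of_tendstoUniformlyOn_diff [CompleteSpace E] {ι : Type*}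
    {U K : Set ℂ} (hU : IsOpen U) (hK : IsCompact K) (hKU : K ⊆ U) {l : Filter ι} [l.NeBot]
    {F : ι → ℂ → E} {f : ℂ → E} (hF : ∀ᶠ i in l, DifferentiableOn ℂ (F i) U)
    (hFf : TendstoUniformlyOn F f l (U \ K)) :
    ∃ g : ℂ → E, DifferentiableOn ℂ g U ∧ EqOn g f (U \ K) := by
  have cauchy : UniformCauchySeqOn F l U :=
    uniformCauchySeqOn_of_diff hU hK hKU hF hFf.uniformCauchySeqOn
  have pointwise_limit : ∀ z ∈ U, ∃ y, Tendsto (F · z) l (𝓝 y) := fun z hz =>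
    cauchy_map_iff_exists_tendsto.1 (cauchy.cauchy_map hz)
  choose! g hg using pointwise_limit
  have uniform_limit : TendstoUniformlyOn F g l U := cauchy.tendstoUniformlyOn_of_tendsto hg
  exact ⟨g, uniform_limit.tendstoLocallyUniformlyOn.differentiableOn hF hU,
    fun z hz => tendsto_nhds_unique (hg z hz.1) (hFf.tendsto_at hz)⟩

end MaximumPrinciple

namespace MemAp

variable {p : ℕ∞} {U : Set ℂ} {f g : ℂ → ℂ}

theorem contDiffAt (hf : MemAp p U f) (hU : IsOpen U) {n : WithTop ℕ∞} {z : ℂ} (hz : z ∈ U) :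
    ContDiffAt ℂ n f z :=
  (hf.1.analyticAt (hU.mem_nhds hz)).contDiffAt

theorem zero : MemAp p U 0 := by
  refine ⟨differentiableOn_const 0, fun j _ => ⟨0, continuousOn_const, fun z _ => ?_⟩⟩
  simp

theorem add (hU : IsOpen U) (hf : MemAp p U f) (hg : MemAp p U g) : MemAp p U (f + g) := by
  refine ⟨hf.1.add hg.1, fun j hj => ?_⟩
  obtain ⟨a, ha, haf⟩ := hf.2 j hj
  obtain ⟨b, hb, hbg⟩ := hg.2 j hj
  refine ⟨a + b, ha.add hb, fun z hz => ?_⟩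
  rw [iteratedDeriv_add (hf.contDiffAt hU hz) (hg.contDiffAt hU hz), Pi.add_apply, haf hz, hbg hz]

theorem const_smul (c : ℂ) (hf : MemAp p U f) : MemAp p U (c • f) := by
  refine ⟨hf.1.const_smul c, fun j hj => ?_⟩
  obtain ⟨a, ha, haf⟩ := hf.2 j hj
  refine ⟨c • a, ha.const_smul c, fun z hz => ?_⟩
  rw [iteratedDeriv_const_smul_field, Pi.smul_apply, haf hz]

theorem isBounded_image_iteratedDeriv (hf : MemAp p U f) (hU : IsBounded U) {j : ℕ}
    (hj : (j : ℕ∞) ≤ p) : IsBounded (iteratedDeriv j f '' U) := by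
  obtain ⟨g, hg, hgf⟩ := hf.2 j hj
  rw [← hgf.image_eq]
  exact (hU.isCompact_closure.image_of_continuousOn hg).isBounded.subset (image_mono subset_closure)

theorem of_eqOn_diff {K : Set ℂ} (hU : IsOpen U) (hK : IsClosed K) (hKU : K ⊆ U)
    (hf : MemAp p (U \ K) f) (hg : DifferentiableOn ℂ g U) (hgf : EqOn g f (U \ K)) :
    MemAp p U g := by
  refine ⟨hg, fun j hj => ?_⟩
  obtain ⟨a, ha, haf⟩ := hf.2 j hj
  have continuousOn_iteratedDeriv : ContinuousOn (iteratedDeriv j g) U :=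
    iteratedDeriv_eq_iterate (f := g) ▸ ((hg.analyticOnNhd hU).iterated_deriv j).continuousOn
  exact exists_continuousOn_closure_of_diff hU hK hKU continuousOn_iteratedDeriv ha
    (haf.trans (hgf.iteratedDeriv_of_isOpen (hU.sdiff hK) j).symm)

end MemAp

/-- `A^p(U)` as a subspace of the space of all functions `ℂ → ℂ`, the source of the vector space
structure on `ApSpace p U`. -/
def apSubmodule (p : ℕ∞) (U : Opens ℂ) : Submodule ℂ (ℂ → ℂ) where
  carrier := {f | MemAp p U f}
  zero_mem' := MemAp.zero
  add_mem' := MemAp.add U.isOpen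
  smul_mem' c _ := MemAp.const_smul c

namespace ApSpace

variable {p : ℕ∞} {U Ω G : Opens ℂ}

instance : AddCommGroup (ApSpace p U) := inferInstanceAs (AddCommGroup (apSubmodule p U))

instance : Module ℂ (ApSpace p U) := inferInstanceAs (Module ℂ (apSubmodule p U))

noncomputable instance instTopologicalSpace : TopologicalSpace (ApSpace p U) := apTop p U

/-- The `j`-th derivative on `U` as a linear map on `A^p(U)`. -/
noncomputable def iteratedDerivₗ (p : ℕ∞) (U : Opens ℂ) (j : ℕ) :
    ApSpace p U →ₗ[ℂ] U → ℂ where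
  toFun f z := iteratedDeriv j f.1 z
  map_add' f g := funext fun z =>
    iteratedDeriv_add (f.2.contDiffAt U.isOpen z.2) (g.2.contDiffAt U.isOpen z.2)
  map_smul' c f := funext fun _ => iteratedDeriv_const_smul_field c f.1

theorem topology_eq_iInf : (ApSpace.instTopologicalSpace : TopologicalSpace (ApSpace p U)) =
    ⨅ (j : ℕ) (_ : (j : ℕ∞) ≤ p),
      TopologicalSpace.induced (UniformFun.ofFun ∘ iteratedDerivₗ p U j) inferInstance := by
  refine (induced_to_pi _).trans (iInf_congr fun j => ?_)
  by_cases hj : (j : ℕ∞) ≤ p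
  · simp only [hj, if_true, iInf_pos]
    rfl
  · simp only [hj, if_false, iInf_neg, not_false_eq_true, induced_const]

instance : ContinuousAdd (ApSpace p U) := by
  let ofFunHom : (U → ℂ) →+ (U →ᵤ ℂ) := AddMonoidHom.id (U → ℂ)
  rw [topology_eq_iInf]
  exact continuousAdd_iInf fun j => continuousAdd_iInf fun _ =>
    continuousAdd_induced (ofFunHom.comp (iteratedDerivₗ p U j).toAddMonoidHom)

theorem continuousSMul (hU : IsBounded (U : Set ℂ)) : ContinuousSMul ℂ (ApSpace p U) := by
  rw [topology_eq_iInf]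
  refine continuousSMul_iInf fun j => continuousSMul_iInf fun hj => ?_
  let _ : TopologicalSpace (ApSpace p U) :=
    .induced (UniformFun.ofFun ∘ iteratedDerivₗ p U j) inferInstance
  refine UniformFun.continuousSMul_induced_of_range_bounded ℂ U ℂ (ApSpace p U)
    (iteratedDerivₗ p U j) ⟨rfl⟩ fun f => ?_
  have bounded_image : IsBounded (iteratedDeriv j f.1 '' U) :=
    f.2.isBounded_image_iteratedDeriv hU hj
  rw [image_eq_range] at bounded_image
  exact (NormedSpace.isVonNBounded_iff ℂ).2 bounded_image

theorem tendstoUniformlyOn_nhds (f : ApSpace p U) :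
    TendstoUniformlyOn (fun g : ApSpace p U => g.1) f.1 (𝓝 f) U := by
  have continuous_restrict : Continuous (UniformFun.ofFun ∘ iteratedDerivₗ p U 0) := by
    rw [continuous_iff_le_induced, topology_eq_iInf]
    exact (iInf_le _ 0).trans (iInf_le _ (by simp))
  exact tendstoUniformlyOn_iff_tendstoUniformly_comp_coe.2
    (UniformFun.tendsto_iff_tendstoUniformly.1 (continuous_restrict.tendsto f))

/-- The subspace of those `f ∈ A^p(G)` that agree on `G` with some `F ∈ A^p(Ω)`. -/
def extendable (p : ℕ∞) (Ω G : Opens ℂ) : Submodule ℂ (ApSpace p G) where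
  carrier := {f | ∃ F : ℂ → ℂ, MemAp p Ω F ∧ EqOn F f.1 G}
  zero_mem' := ⟨0, MemAp.zero, eqOn_refl _ _⟩
  add_mem' := fun ⟨F, hF, hFf⟩ ⟨H, hH, hHg⟩ =>
    ⟨F + H, hF.add Ω.isOpen hH, fun _ hz => congrArg₂ (· + ·) (hFf hz) (hHg hz)⟩
  smul_mem' := fun c _ ⟨F, hF, hFf⟩ =>
    ⟨c • F, hF.const_smul c, fun _ hz => congrArg (c • ·) (hFf hz)⟩

theorem isClosed_extendable {L : Set ℂ} (hL : IsCompact L) (hLΩ : L ⊆ Ω)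
    (hG : (G : Set ℂ) = (Ω : Set ℂ) \ L) : IsClosed (extendable p Ω G : Set (ApSpace p G)) := by
  obtain ⟨G, hGo⟩ := G
  obtain rfl : G = (Ω : Set ℂ) \ L := hG
  set G : Opens ℂ := ⟨Ω \ L, hGo⟩
  refine isClosed_of_closure_subset fun f hf => ?_
  have : (𝓝[(extendable p Ω G : Set (ApSpace p G))] f).NeBot :=
    mem_closure_iff_nhdsWithin_neBot.1 hf
  have exists_extension : ∀ g ∈ extendable p Ω G, ∃ F, MemAp p Ω F ∧ EqOn F g.1 G := fun _ => id
  choose! ext memAp_ext eqOn_ext using exists_extension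
  have tendsto_ext : TendstoUniformlyOn ext f.1 (𝓝[(extendable p Ω G : Set _)] f) G :=
    TendstoUniformlyOn.congr
      (fun u hu => (tendstoUniformlyOn_nhds f u hu).filter_mono nhdsWithin_le_nhds)
      (eventually_mem_nhdsWithin.mono fun g hg => (eqOn_ext g hg).symm)
  obtain ⟨F, hF, hFf⟩ := exists_differentiableOn_eqOn_of_tendstoUniformlyOn_diff Ω.isOpen hL hLΩ
    (eventually_mem_nhdsWithin.mono fun g hg => (memAp_ext g hg).1) tendsto_ext
  exact ⟨F, MemAp.of_eqOn_diff Ω.isOpen hL.isClosed hLΩ f.2 hF hFf, hFf⟩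

end ApSpace

/-- Let `p ∈ {0,1,2,...} ∪ {∞}`, `Ω ⊆ ℂ` open and bounded, `L ⊆ Ω` compact and
`G = Ω \ L`. If some `f0 ∈ A^p(G)` admits no extension `F0 ∈ A^p(Ω)` with `F0 = f0`
on `G`, then the set of `f ∈ A^p(G)` admitting no extension `F ∈ A^p(Ω)` with
`F = f` on `G` is a dense and `Gδ` subset of `A^p(G)`. -/
theorem noApExtension_dense_Gdelta
    (p : ℕ∞) (Ω : Set ℂ) (hΩo : IsOpen Ω) (hΩb : Bornology.IsBounded Ω)
    (L : Set ℂ) (hL : IsCompact L) (hLΩ : L ⊆ Ω)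
    (f0 : ℂ → ℂ) (hf0 : MemAp p (Ω \ L) f0)
    (hne : NoApExtension p Ω (Ω \ L) f0) :
    @Dense (ApSpace p (Ω \ L)) (apTop p (Ω \ L))
      {f | NoApExtension p Ω (Ω \ L) f.1} ∧
    @IsGδ (ApSpace p (Ω \ L)) (apTop p (Ω \ L))
      {f | NoApExtension p Ω (Ω \ L) f.1} := by
  let G : Opens ℂ := ⟨Ω \ L, hΩo.sdiff hL.isClosed⟩
  let E : Submodule ℂ (ApSpace p G) := ApSpace.extendable p ⟨Ω, hΩo⟩ G
  have hE_ne_top : E ≠ ⊤ := fun h => hne (Submodule.eq_top_iff'.1 h (⟨f0, hf0⟩ : ApSpace p G))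
  have hE_closed : IsClosed (E : Set (ApSpace p G)) := ApSpace.isClosed_extendable hL hLΩ rfl
  have : ContinuousSMul ℂ (ApSpace p G) := ApSpace.continuousSMul (hΩb.subset sdiff_subset)
  exact ⟨dense_compl_of_submodule_ne_top hE_ne_top, hE_closed.isOpen_compl.isGδ⟩
end
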